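/- arXiv:2602.14325 — 11 statements merged into one kernel-verified Lean document; each statement's English description precedes it below -/
import Mathlib

section
/- (Nim-periodicity) For every Lengyel transfer game L(b;x₁,y₁;x₂,y₂) and every position (x,y) ∈ ℕ×ℕ, one has SG(x, y+b) = SG(x,y) ⊕ 1. -/
/-- The minimum excludant of a set of naturals: the least natural number not in the set. -/
noncomputable def mex (S : Set ℕ) : ℕ := sInf {n : ℕ | n ∉ S}

/-- `SG` is the Sprague–Grundy function of the Lengyel transfer game `L(b; x₁,y₁; x₂,y₂)`:
from `(x,y)` one may move to `(x, y−b)` (when `y ≥ b`), to `(x−x₁, y+y₁)` (when `x ≥ x₁`),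
or to `(x−x₂, y+y₂)` (when `x ≥ x₂`), and `SG` satisfies the mex recurrence. -/
def IsLengyelSG (b x1 y1 x2 y2 : ℕ) (SG : ℕ → ℕ → ℕ) : Prop :=
  ∀ x y : ℕ, SG x y = mex
    ((if b ≤ y then ({SG x (y - b)} : Set ℕ) else ∅) ∪
     (if x1 ≤ x then ({SG (x - x1) (y + y1)} : Set ℕ) else ∅) ∪
     (if x2 ≤ x then ({SG (x - x2) (y + y2)} : Set ℕ) else ∅))

theorem xor_one_eq (n : ℕ) : n ^^^ 1 = if n % 2 = 0 then n + 1 else n - 1 := by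
  have h1 : (n ^^^ 1) / 2 = n / 2 := by
    have := Nat.xor_div_two (a := n) (b := 1)
    simpa using this
  have h2 : (n ^^^ 1) % 2 = (n + 1) % 2 := by
    have := @Nat.xor_mod_two_eq n 1
    simpa using this
  split_ifs <;> omega

theorem mex_spec (S : Set ℕ) (hS : S.Finite) : mex S ∉ S ∧ ∀ n < mex S, n ∈ S := by
  have hne : {n : ℕ | n ∉ S}.Nonempty := hS.infinite_compl.nonempty
  refine ⟨Nat.sInf_mem hne, fun n hn => ?_⟩
  by_contra h
  exact Nat.notMem_of_lt_sInf hn h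

theorem mex_unique (S : Set ℕ) (m : ℕ) (h1 : m ∉ S) (h2 : ∀ n < m, n ∈ S) : mex S = m := by
  apply le_antisymm
  · exact Nat.sInf_le h1
  · by_contra h
    exact Nat.sInf_mem (s := {n : ℕ | n ∉ S}) ⟨m, h1⟩ (h2 _ (not_le.mp h))

/-- The core mex computation. -/
theorem mex_step (A B : Set ℕ) (g : ℕ) (hB : ∀ n, n ∈ B ↔ n ^^^ 1 ∈ A)
    (h1 : g ∉ A) (h2 : ∀ n < g, n ∈ A ∨ n = g ^^^ 1) : mex ({g} ∪ B) = g ^^^ 1 := by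
  apply mex_unique
  · rintro (h | h)
    · simp only [Set.mem_singleton_iff, xor_one_eq] at h
      split_ifs at h <;> omega
    · rw [hB, Nat.xor_xor_cancel_right] at h
      exact h1 h
  · intro n hn
    by_cases hng : n = g
    · exact Or.inl hng
    · right
      rw [hB]
      have h3 : n ^^^ 1 < g ∧ n ^^^ 1 ≠ g ^^^ 1 := by
        simp only [xor_one_eq] at hn ⊢
        split_ifs at hn ⊢ <;> omega
      exact (h2 _ h3.1).resolve_right h3.2

/-- Nim-periodicity: in any Lengyel transfer game `L(b;x₁,y₁;x₂,y₂)`,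
`SG(x, y+b) = SG(x,y) ⊕ 1` for every position. -/
theorem nim_periodicity (b x1 x2 y1 y2 : ℕ) (hb : 0 < b) (hx1 : 0 < x1) (hx2 : 0 < x2)
    (SG : ℕ → ℕ → ℕ) (hSG : IsLengyelSG b x1 y1 x2 y2 SG) :
    ∀ x y : ℕ, SG x (y + b) = SG x y ^^^ 1 := by
  intro x
  induction x using Nat.strong_induction_on with
  | _ x ihx =>
  let A : ℕ → Set ℕ := fun y => (if x1 ≤ x then ({SG (x - x1) (y + y1)} : Set ℕ) else ∅) ∪
     (if x2 ≤ x then ({SG (x - x2) (y + y2)} : Set ℕ) else ∅)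
  have hfin : ∀ y, (A y).Finite := by
    intro y
    simp only [A]
    split_ifs <;> simp
  have hrec : ∀ y, SG x y = mex ((if b ≤ y then ({SG x (y - b)} : Set ℕ) else ∅) ∪ A y) := by
    intro y
    rw [hSG x y, Set.union_assoc]
  have hxor : ∀ m n : ℕ, m = n ^^^ 1 ↔ m ^^^ 1 = n := by
    intro m n
    constructor <;> rintro rfl <;> rw [Nat.xor_xor_cancel_right]
  have hA : ∀ y n, n ∈ A (y + b) ↔ n ^^^ 1 ∈ A y := by
    intro y n
    have e1 : x1 ≤ x → SG (x - x1) (y + b + y1) = SG (x - x1) (y + y1) ^^^ 1 := by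
      intro h
      rw [add_right_comm]
      exact ihx _ (by omega) _
    have e2 : x2 ≤ x → SG (x - x2) (y + b + y2) = SG (x - x2) (y + y2) ^^^ 1 := by
      intro h
      rw [add_right_comm]
      exact ihx _ (by omega) _
    by_cases c1 : x1 ≤ x <;> by_cases c2 : x2 ≤ x <;> simp [A, c1, c2, e1, e2, hxor]
  intro y
  induction y using Nat.strong_induction_on with
  | _ y ihy =>
  have key : SG x y ∉ A y ∧ ∀ n < SG x y, n ∈ A y ∨ n = SG x y ^^^ 1 := by
    by_cases hy : b ≤ y
    · have hr := hrec y
      rw [if_pos hy] at hr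
      have hs := mex_spec ({SG x (y - b)} ∪ A y) ((Set.finite_singleton _).union (hfin y))
      rw [← hr] at hs
      have hi := ihy (y - b) (by omega)
      rw [Nat.sub_add_cancel hy] at hi
      refine ⟨fun h => hs.1 (Or.inr h), fun n hn => ?_⟩
      rcases hs.2 n hn with h | h
      · right
        rw [hi, Nat.xor_xor_cancel_right]
        exact h
      · exact Or.inl h
    · have hr := hrec y
      rw [if_neg hy, Set.empty_union] at hr
      have hs := mex_spec (A y) (hfin y)
      rw [← hr] at hs
      exact ⟨hs.1, fun n hn => Or.inl (hs.2 n hn)⟩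
  rw [hrec (y + b), if_pos (by omega), Nat.add_sub_cancel]
  exact mex_step (A y) (A (y + b)) _ (hA y) key.1 key.2
end

section
/- For every Lengyel transfer game L(b;x₁,y₁;x₂,y₂), the second component of the period is 2b: SG(x, y+2b) = SG(x,y) for all (x,y) ∈ ℕ×ℕ, and 2b is the least positive integer q such that SG(x, y+q) = SG(x,y) holds for all (x,y) ∈ ℕ×ℕ. -/
theorem mex_not_mem {S : Set ℕ} (hS : S.Finite) : mex S ∉ S :=
  Nat.sInf_mem (s := {n : ℕ | n ∉ S}) hS.infinite_compl.nonempty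

theorem mem_of_lt_mex {S : Set ℕ} {m : ℕ} (h : m < mex S) : m ∈ S := by
  by_contra hm
  exact Nat.notMem_of_lt_sInf h hm

theorem mex_eq {S : Set ℕ} {n : ℕ} (h1 : n ∉ S) (h2 : ∀ m < n, m ∈ S) : mex S = n := by
  apply le_antisymm
  · exact Nat.sInf_le h1
  · by_contra h
    push Not at h
    exact Nat.sInf_mem (s := {n : ℕ | n ∉ S}) ⟨n, h1⟩ (h2 _ h)

theorem mex_insert {S : Set ℕ} (hS : S.Finite) {v : ℕ} (h : v ≠ mex S) :
    mex ({v} ∪ S) = mex S := by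
  apply mex_eq
  · rintro (h' | h')
    · exact h h'.symm
    · exact mex_not_mem hS h'
  · intro m hm
    exact Or.inr (mem_of_lt_mex hm)

theorem vertical_period_is_two_b (b x1 x2 y1 y2 : ℕ) (hb : 0 < b) (hx1 : 0 < x1) (hx2 : 0 < x2)
    (SG : ℕ → ℕ → ℕ) (hSG : IsLengyelSG b x1 y1 x2 y2 SG) :
    (∀ x y : ℕ, SG x (y + 2 * b) = SG x y) ∧
    IsLeast {q : ℕ | 0 < q ∧ ∀ x y : ℕ, SG x (y + q) = SG x y} (2 * b) := by
  obtain ⟨A, hA⟩ : ∃ A : ℕ → ℕ → Set ℕ, A = fun x y =>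
     (if x1 ≤ x then ({SG (x - x1) (y + y1)} : Set ℕ) else ∅) ∪
     (if x2 ≤ x then ({SG (x - x2) (y + y2)} : Set ℕ) else ∅) := ⟨_, rfl⟩
  have hfin : ∀ x y, (A x y).Finite := by
    intro x y
    rw [hA]
    apply Set.Finite.union <;> split_ifs <;> simp
  have hlow : ∀ x y, y < b → SG x y = mex (A x y) := by
    intro x y h
    rw [hSG x y, if_neg (by omega), Set.empty_union, hA]
  have hhigh : ∀ x y, SG x (y + b) = mex ({SG x y} ∪ A x (y + b)) := by
    intro x y
    rw [hSG x (y + b), if_pos (by omega), Set.union_assoc, hA, Nat.add_sub_cancel]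
  have hne : ∀ x y, SG x (y + b) ≠ SG x y := by
    intro x y h
    have := mex_not_mem ((Set.finite_singleton (SG x y)).union (hfin x (y + b)))
    rw [← hhigh, h] at this
    exact this (Or.inl rfl)
  have per : ∀ x y : ℕ, SG x (y + 2 * b) = SG x y := by
    intro x
    induction x using Nat.strong_induction_on with
    | _ x ihx =>
    have hAp : ∀ y, A x (y + 2 * b) = A x y := by
      intro y
      rw [hA]
      have e1 : y + 2 * b + y1 = (y + y1) + 2 * b := by omega
      have e2 : y + 2 * b + y2 = (y + y2) + 2 * b := by omega
      simp only [e1, e2]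
      congr 1
      · split_ifs with h
        · rw [ihx _ (by omega)]
        · rfl
      · split_ifs with h
        · rw [ihx _ (by omega)]
        · rfl
    intro y
    induction y using Nat.strong_induction_on with
    | _ y ihy =>
    have e : y + 2 * b = (y + b) + b := by omega
    have hAp' := hAp y
    rw [e] at hAp' ⊢
    rw [hhigh, hAp']
    by_cases hy : y < b
    · have h := hne x y
      rw [hlow x y hy] at h ⊢
      exact mex_insert (hfin x y) h
    · obtain ⟨z, rfl⟩ : ∃ z, y = z + b := ⟨y - b, by omega⟩
      have h := ihy z (by omega)
      rw [show z + 2 * b = z + b + b by omega] at h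
      rw [h, ← hhigh]
  refine ⟨per, ⟨by omega, per⟩, ?_⟩
  rintro q ⟨hq, hp⟩
  have hA0 : ∀ y, A 0 y = ∅ := by
    intro y
    rw [hA]
    simp [hx1.ne', hx2.ne']
  have h0 : ∀ y, y < b → SG 0 y = 0 := by
    intro y hy
    rw [hlow 0 y hy, hA0]
    exact mex_eq (by simp) (by simp)
  by_contra hlt
  push Not at hlt
  by_cases hqb : q < b
  · have h := hp 0 (b - q)
    rw [Nat.sub_add_cancel hqb.le, h0 (b - q) (by omega)] at h
    have h' := hne 0 0
    rw [Nat.zero_add, h0 0 hb] at h'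
    exact h' h
  · have h := hp 0 0
    have h' := hne 0 (q - b)
    rw [Nat.sub_add_cancel (by omega), h0 (q - b) (by omega)] at h'
    rw [Nat.zero_add, h0 0 hb] at h
    exact h' h
end

section
/- In any Lengyel transfer game L(b;x₁,y₁;x₂,y₂): for every position (x,y) ∈ ℕ×ℕ, if y mod 2b < b then SG(x,y) ≠ 3, and if y mod 2b ≥ b then SG(x,y) ≠ 2. -/
theorem mex_facts (S : Set ℕ) (hS : S.Finite) : mex S ∉ S ∧ ∀ m < mex S, m ∈ S := by
  have hne : {n : ℕ | n ∉ S}.Nonempty := hS.infinite_compl.nonempty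
  refine ⟨Nat.sInf_mem hne, fun m hm => ?_⟩
  by_contra h
  exact Nat.notMem_of_lt_sInf hm h

/-- the pairing `0 ↔ 1`, `2 ↔ 3` -/
def Paired (a c : ℕ) : Prop :=
  (a = 0 ∧ c = 1) ∨ (a = 1 ∧ c = 0) ∨ (a = 2 ∧ c = 3) ∨ (a = 3 ∧ c = 2)

theorem sg_facts {b x1 x2 y1 y2 : ℕ} {SG : ℕ → ℕ → ℕ} (hSG : IsLengyelSG b x1 y1 x2 y2 SG)
    (x y : ℕ) :
    (b ≤ y → SG x y ≠ SG x (y - b)) ∧ (x1 ≤ x → SG x y ≠ SG (x - x1) (y + y1)) ∧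
    (x2 ≤ x → SG x y ≠ SG (x - x2) (y + y2)) ∧
    ∀ m < SG x y, (b ≤ y ∧ m = SG x (y - b)) ∨ (x1 ≤ x ∧ m = SG (x - x1) (y + y1)) ∨
      (x2 ≤ x ∧ m = SG (x - x2) (y + y2)) := by
  have h := mex_facts ((if b ≤ y then ({SG x (y - b)} : Set ℕ) else ∅) ∪
     (if x1 ≤ x then ({SG (x - x1) (y + y1)} : Set ℕ) else ∅) ∪
     (if x2 ≤ x then ({SG (x - x2) (y + y2)} : Set ℕ) else ∅)) (by
      refine Set.Finite.union (Set.Finite.union ?_ ?_) ?_ <;> split_ifs <;> simp)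
  rw [← hSG x y] at h
  have key : ∀ m, m ∈ ((if b ≤ y then ({SG x (y - b)} : Set ℕ) else ∅) ∪
     (if x1 ≤ x then ({SG (x - x1) (y + y1)} : Set ℕ) else ∅) ∪
     (if x2 ≤ x then ({SG (x - x2) (y + y2)} : Set ℕ) else ∅)) ↔
      ((b ≤ y ∧ m = SG x (y - b)) ∨ (x1 ≤ x ∧ m = SG (x - x1) (y + y1)) ∨
      (x2 ≤ x ∧ m = SG (x - x2) (y + y2))) := by
    intro m
    split_ifs <;> simp [*] <;> tauto
  obtain ⟨h1, h2⟩ := h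
  rw [key] at h1
  refine ⟨fun hh e => h1 (Or.inl ⟨hh, e⟩), fun hh e => h1 (Or.inr (Or.inl ⟨hh, e⟩)),
    fun hh e => h1 (Or.inr (Or.inr ⟨hh, e⟩)), fun m hm => (key m).1 (h2 m hm)⟩

theorem pairing_core (B : Prop) (p a c : ℕ) (U U' : ℕ → Prop)
    (hp : ¬ B ∨ Paired p a) (ha : ¬ U a) (ham : ∀ m < a, (B ∧ m = p) ∨ U m)
    (hca : c ≠ a) (hc : ¬ U' c) (hcm : ∀ m < c, m = a ∨ U' m)
    (h0 : U' 0 ↔ U 1) (h1 : U' 1 ↔ U 0)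
    (h2 : U 0 → U 1 → (¬ U 2 ∧ ¬ U 3 ∧ ¬ U' 2 ∧ ¬ U' 3)) : Paired a c := by
  have a0 : U 0 → a ≠ 0 := fun h e => ha (e ▸ h)
  have a1 : U 1 → a ≠ 1 := fun h e => ha (e ▸ h)
  have c0 : U' 0 → c ≠ 0 := fun h e => hc (e ▸ h)
  have c1 : U' 1 → c ≠ 1 := fun h e => hc (e ▸ h)
  have m0 := ham 0
  have m1 := ham 1
  have m2 := ham 2
  have n0 := hcm 0
  have n1 := hcm 1
  have n2 := hcm 2
  have n3 := hcm 3
  clear ham hcm ha hc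
  unfold Paired at *
  by_cases u0 : U 0 <;> by_cases u1 : U 1
  · obtain ⟨k1, k2, k3, k4⟩ := h2 u0 u1
    have := a0 u0
    have := a1 u1
    have := c0 (h0.2 u1)
    have := c1 (h1.2 u0)
    simp only [k1, k3, k4, or_false] at m2 n2 n3
    rcases hp with hp | hp
    · simp only [hp, false_and, imp_false, not_lt] at m2
      omega
    · omega
  · have v0 : ¬ U' 0 := fun h => u1 (h0.1 h)
    have := a0 u0
    have := c1 (h1.2 u0)
    simp only [u1, v0, or_false] at m1 n0
    rcases hp with hp | hp
    · simp only [hp, false_and, imp_false, not_lt] at m1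
      omega
    · omega
  · have v1 : ¬ U' 1 := fun h => u0 (h1.1 h)
    have := a1 u1
    have := c0 (h0.2 u1)
    simp only [u0, v1, or_false] at m0 n1
    rcases hp with hp | hp
    · simp only [hp, false_and, imp_false, not_lt] at m0
      omega
    · omega
  · have v1 : ¬ U' 1 := fun h => u0 (h1.1 h)
    have v0 : ¬ U' 0 := fun h => u1 (h0.1 h)
    simp only [u0, u1, v0, v1, or_false] at m0 m1 n0 n1
    rcases hp with hp | hp
    · simp only [hp, false_and, imp_false, not_lt] at m0
      omega
    · omega

theorem sg_paired {b x1 x2 y1 y2 : ℕ} (hb : 0 < b) (hx1 : 0 < x1) (hx2 : 0 < x2)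
    {SG : ℕ → ℕ → ℕ} (hSG : IsLengyelSG b x1 y1 x2 y2 SG) (x : ℕ) :
    ∀ y, Paired (SG x y) (SG x (y + b)) := by
  induction x using Nat.strong_induction_on with
  | _ x ihx =>
  intro y
  induction y using Nat.strong_induction_on with
  | _ y ihy =>
  obtain ⟨a1, a2, a3, a4⟩ := sg_facts hSG x y
  obtain ⟨c1, c2, c3, c4⟩ := sg_facts hSG x (y + b)
  have hu : x1 ≤ x → Paired (SG (x - x1) (y + y1)) (SG (x - x1) (y + b + y1)) := fun h => by
    have := ihx (x - x1) (by omega) (y + y1)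
    rwa [show y + b + y1 = y + y1 + b by omega]
  have hv : x2 ≤ x → Paired (SG (x - x2) (y + y2)) (SG (x - x2) (y + b + y2)) := fun h => by
    have := ihx (x - x2) (by omega) (y + y2)
    rwa [show y + b + y2 = y + y2 + b by omega]
  have hp : b ≤ y → Paired (SG x (y - b)) (SG x y) := fun h => by
    have := ihy (y - b) (by omega)
    rwa [show y - b + b = y by omega] at this
  rw [show y + b - b = y by omega] at c1 c4
  rw [imp_iff_not_or] at hp
  refine pairing_core (b ≤ y) (SG x (y - b)) _ _
    (fun m => (x1 ≤ x ∧ m = SG (x - x1) (y + y1)) ∨ (x2 ≤ x ∧ m = SG (x - x2) (y + y2)))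
    (fun m => (x1 ≤ x ∧ m = SG (x - x1) (y + b + y1)) ∨
      (x2 ≤ x ∧ m = SG (x - x2) (y + b + y2))) hp ?_ a4 (c1 (by omega)) ?_ ?_ ?_ ?_ ?_
  · rintro (⟨h, e⟩ | ⟨h, e⟩)
    exacts [a2 h e, a3 h e]
  · rintro (⟨h, e⟩ | ⟨h, e⟩)
    exacts [c2 h e, c3 h e]
  · intro m hm
    rcases c4 m hm with ⟨_, h⟩ | h
    exacts [Or.inl h, Or.inr h]
  all_goals
    clear a1 a2 a3 a4 c1 c2 c3 c4 ihx ihy hSG hp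
    unfold Paired at *
    omega

/-- In any Lengyel transfer game: positions with `y mod 2b < b` never have value `3`,
and positions with `y mod 2b ≥ b` never have value `2`. -/
theorem twos_vs_threes (b x1 x2 y1 y2 : ℕ) (hb : 0 < b) (hx1 : 0 < x1) (hx2 : 0 < x2)
    (SG : ℕ → ℕ → ℕ) (hSG : IsLengyelSG b x1 y1 x2 y2 SG) :
    ∀ x y : ℕ, (y % (2 * b) < b → SG x y ≠ 3) ∧ (b ≤ y % (2 * b) → SG x y ≠ 2) := by
  intro x y
  induction y using Nat.strong_induction_on with
  | _ y ih =>
  by_cases hy : b ≤ y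
  · have hp := sg_paired hb hx1 hx2 hSG x (y - b)
    rw [show y - b + b = y by omega] at hp
    have hi := ih (y - b) (by omega)
    have hm : y % (2 * b) = ((y - b) % (2 * b) + b) % (2 * b) := by
      conv_lhs => rw [show y = (y - b) + b by omega]
      simp
    have hlt : (y - b) % (2 * b) < 2 * b := Nat.mod_lt _ (by omega)
    unfold Paired at hp
    by_cases hc : (y - b) % (2 * b) < b
    · rw [Nat.mod_eq_of_lt (a := (y - b) % (2 * b) + b) (by omega)] at hm
      have := hi.1 hc
      omega
    · rw [Nat.mod_eq_sub_mod (a := (y - b) % (2 * b) + b) (by omega),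
        Nat.mod_eq_of_lt (a := (y - b) % (2 * b) + b - 2 * b) (by omega)] at hm
      have := hi.2 (by omega)
      omega
  · have hm : y % (2 * b) = y := Nat.mod_eq_of_lt (by omega)
    obtain ⟨a1, a2, a3, a4⟩ := sg_facts hSG x y
    refine ⟨fun _ h => ?_, fun h => by omega⟩
    have a40 := a4 0
    have a41 := a4 1
    have a42 := a4 2
    omega
end

section
/- (Dilation) For all positive integers m and n, the Sprague–Grundy array of the dilated Lengyel transfer game L(nb; m·x₁, n·y₁; m·x₂, n·y₂) is obtained from that of L(b;x₁,y₁;x₂,y₂) by replacing each entry by an m×n block copy of itself: for all (x,y) ∈ ℕ×ℕ, SG_{L(nb;mx₁,ny₁;mx₂,ny₂)}(x,y) = SG_{L(b;x₁,y₁;x₂,y₂)}(⌊x/m⌋, ⌊y/n⌋). -/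
/-- Dilation: the SG array of `L(nb; m·x₁, n·y₁; m·x₂, n·y₂)` is obtained from that of
`L(b;x₁,y₁;x₂,y₂)` by replacing each entry with an `m × n` block copy of itself. -/
theorem dilation (b x1 x2 y1 y2 m n : ℕ)
    (hb : 0 < b) (hx1 : 0 < x1) (hx2 : 0 < x2) (hm : 0 < m) (hn : 0 < n)
    (SG SG' : ℕ → ℕ → ℕ)
    (hSG : IsLengyelSG b x1 y1 x2 y2 SG)
    (hSG' : IsLengyelSG (n * b) (m * x1) (n * y1) (m * x2) (n * y2) SG') :
    ∀ x y : ℕ, SG' x y = SG (x / m) (y / n) := by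
  intro x
  induction x using Nat.strong_induction_on with
  | _ x ihx =>
  intro y
  induction y using Nat.strong_induction_on with
  | _ y ihy =>
  have key : ∀ k c z : ℕ, 0 < k → (k * c ≤ z ↔ c ≤ z / k) := by
    intro k c z hk
    rw [Nat.le_div_iff_mul_le hk, mul_comm]
  rw [hSG' x y, hSG (x / m) (y / n)]
  have h0 : (if n * b ≤ y then ({SG' x (y - n * b)} : Set ℕ) else ∅) =
      if b ≤ y / n then ({SG (x / m) (y / n - b)} : Set ℕ) else ∅ := by
    by_cases h : n * b ≤ y
    · have hp : 0 < n * b := Nat.mul_pos hn hb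
      rw [if_pos h, if_pos ((key n b y hn).1 h), ihy _ (by omega), Nat.sub_mul_div]
    · rw [if_neg h, if_neg (fun h' => h ((key n b y hn).2 h'))]
  have h1 : ∀ a c : ℕ, 0 < a →
      (if m * a ≤ x then ({SG' (x - m * a) (y + n * c)} : Set ℕ) else ∅) =
      if a ≤ x / m then ({SG (x / m - a) (y / n + c)} : Set ℕ) else ∅ := by
    intro a c ha
    by_cases h : m * a ≤ x
    · have hp : 0 < m * a := Nat.mul_pos hm ha
      rw [if_pos h, if_pos ((key m a x hm).1 h), ihx _ (by omega), Nat.sub_mul_div,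
        Nat.add_mul_div_left _ _ hn]
    · rw [if_neg h, if_neg (fun h' => h ((key m a x hm).2 h'))]
  rw [h0, h1 x1 y1 hx1, h1 x2 y2 hx2]
end

section
/- (Zeroeth Main Theorem) Consider the two-move game L(b;x₁,y₁). If y₁ is an odd multiple of b (i.e. there is an odd k ≥ 1 with y₁ = k·b), then L(b;x₁,y₁) has period (1, 2b): SG(x+1,y) = SG(x,y) for all (x,y), and 2b is the least positive q with SG(x,y+q) = SG(x,y) for all (x,y). Otherwise, setting p = 2b·x₁ / gcd(2b, y₁+b), the game has period (p, 2b): p is the least positive integer with SG(x+p,y) = SG(x,y) for all (x,y), and 2b is the least positive q with SG(x,y+q) = SG(x,y) for all (x,y). -/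
/-- `SG` is the Sprague–Grundy function of the two-move game `L(b; x₁,y₁)`:
from `(x,y)` one may move to `(x, y−b)` (when `y ≥ b`) or to `(x−x₁, y+y₁)` (when `x ≥ x₁`). -/
def IsLengyel2SG (b x1 y1 : ℕ) (SG : ℕ → ℕ → ℕ) : Prop :=
  ∀ x y : ℕ, SG x y = mex
    ((if b ≤ y then ({SG x (y - b)} : Set ℕ) else ∅) ∪
     (if x1 ≤ x then ({SG (x - x1) (y + y1)} : Set ℕ) else ∅))

theorem mex_eq_of (S : Set ℕ) (n : ℕ) (h1 : n ∉ S) (h2 : ∀ m < n, m ∈ S) : mex S = n := by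
  unfold mex
  apply le_antisymm
  · exact Nat.sInf_le h1
  · by_contra h
    push Not at h
    have h3 : sInf {n : ℕ | n ∉ S} ∈ {n : ℕ | n ∉ S} := Nat.sInf_mem ⟨n, h1⟩
    exact h3 (h2 _ h)

/-- The parity of `y / b`. -/
def phi (b y : ℕ) : ℕ := (y / b) % 2

theorem phi_add (b y : ℕ) (hb : 0 < b) : phi b (y + b) = 1 - phi b y := by
  unfold phi
  rw [Nat.add_div_right _ hb]
  omega

theorem phi_lt (b y : ℕ) : phi b y < 2 := Nat.mod_lt _ (by norm_num)

theorem phi_add_mul (b y m : ℕ) (hb : 0 < b) : phi b (y + 2 * b * m) = phi b y := by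
  unfold phi
  rw [show y + 2 * b * m = y + b * (2 * m) by ring, Nat.add_mul_div_left _ _ hb]
  omega

theorem phi_modEq (b u v : ℕ) (hb : 0 < b) (h : u ≡ v [MOD 2 * b]) : phi b u = phi b v := by
  have hu := phi_add_mul b (u % (2 * b)) (u / (2 * b)) hb
  have hv := phi_add_mul b (v % (2 * b)) (v / (2 * b)) hb
  rw [Nat.mod_add_div] at hu hv
  rw [hu, hv, h]

theorem phi_period (b c : ℕ) (hb : 0 < b) (h : ∀ y, phi b (y + c) = phi b y) : 2 * b ∣ c := by
  have hc := Nat.div_add_mod c b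
  have hr := Nat.mod_lt c hb
  set s := c / b
  set r := c % b
  have h0 : s % 2 = 0 := by
    have := h 0
    simpa [phi] using this
  have hr0 : r = 0 := by
    by_contra hne
    have := h (b - r)
    unfold phi at this
    rw [show b - r + c = b * (s + 1) by rw [mul_add]; omega, Nat.mul_div_cancel_left _ hb,
      Nat.div_eq_of_lt (by omega : b - r < b)] at this
    omega
  obtain ⟨t, ht⟩ := Nat.dvd_of_mod_eq_zero h0
  exact ⟨t, by rw [← hc, hr0, ht]; ring⟩

theorem phi_sep (b u v : ℕ) (hb : 0 < b) (h : ∀ y, phi b (y + (u + v)) = phi b (y + u)) :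
    2 * b ∣ v := by
  apply phi_period b v hb
  intro y
  have h1 := h (y + (2 * b * u - u))
  have h2 : u ≤ 2 * b * u := Nat.le_mul_of_pos_left u (by omega)
  rw [show y + (2 * b * u - u) + (u + v) = (y + v) + 2 * b * u by omega,
    show y + (2 * b * u - u) + u = y + 2 * b * u by omega, phi_add_mul _ _ _ hb,
    phi_add_mul _ _ _ hb] at h1
  exact h1

theorem SG_formula (b x1 y1 : ℕ) (hb : 0 < b) (hx1 : 0 < x1)
    (SG : ℕ → ℕ → ℕ) (hSG : IsLengyel2SG b x1 y1 SG) :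
    ∀ x y, SG x y = phi b (y + (x / x1) * (y1 + b)) := by
  intro x
  induction x using Nat.strong_induction_on with
  | _ x ihx =>
  intro y
  induction y using Nat.strong_induction_on with
  | _ y ihy =>
  have hlt := phi_lt b (y + (x / x1) * (y1 + b))
  have o1 : b ≤ y → SG x (y - b) = 1 - phi b (y + (x / x1) * (y1 + b)) := by
    intro h
    rw [ihy (y - b) (by omega)]
    have h1 := phi_add b (y - b + (x / x1) * (y1 + b)) hb
    rw [show y - b + (x / x1) * (y1 + b) + b = y + (x / x1) * (y1 + b) by omega] at h1
    have := phi_lt b (y - b + (x / x1) * (y1 + b))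
    omega
  have o2 : x1 ≤ x → SG (x - x1) (y + y1) = 1 - phi b (y + (x / x1) * (y1 + b)) := by
    intro h
    rw [ihx (x - x1) (by omega)]
    have h1 := phi_add b (y + y1 + ((x - x1) / x1) * (y1 + b)) hb
    have h2 : x / x1 = (x - x1) / x1 + 1 := Nat.div_eq_sub_div hx1 h
    rw [show y + y1 + ((x - x1) / x1) * (y1 + b) + b = y + (x / x1) * (y1 + b) by
      rw [h2]; ring] at h1
    have := phi_lt b (y + y1 + ((x - x1) / x1) * (y1 + b))
    omega
  have o3 : ¬ b ≤ y → ¬ x1 ≤ x → phi b (y + (x / x1) * (y1 + b)) = 0 := by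
    intro h h'
    rw [Nat.div_eq_of_lt (by omega : x < x1)]
    simp [phi, Nat.div_eq_of_lt (by omega : y < b)]
  rw [hSG x y]
  generalize phi b (y + (x / x1) * (y1 + b)) = f at *
  apply mex_eq_of
  · by_cases h : b ≤ y <;> by_cases h' : x1 ≤ x <;> simp [h, h', o1, o2] <;> omega
  · intro m hm
    by_cases h : b ≤ y <;> by_cases h' : x1 ≤ x <;> simp [h, h', o1, o2] <;>
      first
      | omega
      | (have := o3 h h'; omega)

theorem odd_iff (b y1 : ℕ) (hb : 0 < b) :
    (∃ k : ℕ, Odd k ∧ y1 = k * b) ↔ 2 * b ∣ y1 + b := by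
  constructor
  · rintro ⟨k, ⟨m, rfl⟩, rfl⟩
    exact ⟨m + 1, by ring⟩
  · rintro ⟨m, hm⟩
    rcases m with _ | m
    · omega
    · exact ⟨2 * m + 1, ⟨m, rfl⟩, by nlinarith⟩

/-- Zeroeth Main Theorem: in the two-move game `L(b;x₁,y₁)`, if `y₁` is an odd multiple
of `b` then the period is `(1, 2b)`; otherwise the period is
`(2b·x₁ / gcd(2b, y₁+b), 2b)`, with both components least. -/
theorem zeroeth_main_theorem (b x1 y1 : ℕ) (hb : 0 < b) (hx1 : 0 < x1)
    (SG : ℕ → ℕ → ℕ) (hSG : IsLengyel2SG b x1 y1 SG) :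
    ((∃ k : ℕ, Odd k ∧ y1 = k * b) →
      ((∀ x y : ℕ, SG (x + 1) y = SG x y) ∧
       IsLeast {q : ℕ | 0 < q ∧ ∀ x y : ℕ, SG x (y + q) = SG x y} (2 * b))) ∧
    (¬ (∃ k : ℕ, Odd k ∧ y1 = k * b) →
      (IsLeast {p : ℕ | 0 < p ∧ ∀ x y : ℕ, SG (x + p) y = SG x y}
          (2 * b * x1 / Nat.gcd (2 * b) (y1 + b)) ∧
       IsLeast {q : ℕ | 0 < q ∧ ∀ x y : ℕ, SG x (y + q) = SG x y} (2 * b))) := by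
  have F := SG_formula b x1 y1 hb hx1 SG hSG
  have Y : IsLeast {q : ℕ | 0 < q ∧ ∀ x y : ℕ, SG x (y + q) = SG x y} (2 * b) := by
    refine ⟨⟨by omega, fun x y => ?_⟩, ?_⟩
    · rw [F, F, show y + 2 * b + x / x1 * (y1 + b) = y + x / x1 * (y1 + b) + 2 * b * 1 by ring,
        phi_add_mul _ _ _ hb]
    · rintro q ⟨hq, h⟩
      refine Nat.le_of_dvd hq (phi_period b q hb fun y => ?_)
      simpa [F] using h 0 y
  rw [odd_iff b y1 hb]
  refine ⟨fun hd => ⟨fun x y => ?_, Y⟩, fun hd => ⟨?_, Y⟩⟩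
  · obtain ⟨m, hm⟩ := hd
    rw [F, F, hm, mul_left_comm, phi_add_mul _ _ _ hb, mul_left_comm, phi_add_mul _ _ _ hb]
  · generalize y1 + b = c at *
    have hg : 0 < Nat.gcd (2 * b) c := Nat.gcd_pos_of_pos_left _ (by omega)
    have hgd : Nat.gcd (2 * b) c ∣ 2 * b := Nat.gcd_dvd_left _ _
    have hP : 2 * b * x1 / Nat.gcd (2 * b) c = 2 * b / Nat.gcd (2 * b) c * x1 :=
      Nat.div_mul_right_comm hgd x1 |>.symm ▸ rfl
    have key : ∀ s, 2 * b ∣ s * c ↔ 2 * b / Nat.gcd (2 * b) c ∣ s := by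
      intro s
      constructor
      · intro h
        have h1 : 2 * b / Nat.gcd (2 * b) c ∣ s * (c / Nat.gcd (2 * b) c) := by
          rw [← Nat.mul_div_assoc _ (Nat.gcd_dvd_right _ _)]
          exact Nat.div_dvd_div hgd h
        exact (Nat.coprime_div_gcd_div_gcd hg).dvd_of_dvd_mul_right h1
      · intro h
        have h1 := Nat.mul_dvd_mul h (Nat.gcd_dvd_right (2 * b) c)
        rwa [Nat.div_mul_cancel hgd] at h1
    have hpos : 0 < 2 * b / Nat.gcd (2 * b) c :=
      Nat.div_pos (Nat.le_of_dvd (by omega) hgd) hg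
    rw [hP]
    refine ⟨⟨Nat.mul_pos hpos hx1, fun x y => ?_⟩, ?_⟩
    · obtain ⟨m, hm⟩ := (key _).2 (dvd_refl _)
      rw [F, F, Nat.add_mul_div_right _ _ hx1, add_mul, hm, ← add_assoc, phi_add_mul _ _ _ hb]
    · rintro p ⟨hp, h⟩
      have hpd := Nat.mod_add_div p x1
      have hr := Nat.mod_lt p hx1
      set s := p / x1
      set t := p % x1
      have h0 : 2 * b ∣ s * c := by
        apply phi_sep b 0 _ hb
        intro y
        have := h 0 y
        rw [F, F] at this
        simpa using this
      have ht : t = 0 := by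
        by_contra hne
        have h1 : 2 * b ∣ (s + 1) * c := by
          apply phi_sep b 0 _ hb
          intro y
          have := h (x1 - t) y
          rw [F, F, show x1 - t + p = x1 * (s + 1) by rw [mul_add]; omega,
            Nat.mul_div_cancel_left _ hx1, Nat.div_eq_of_lt (by omega : x1 - t < x1)] at this
          simpa using this
        apply hd
        rw [add_mul, one_mul] at h1
        exact (Nat.dvd_add_right h0).1 h1
      have h2 := (key s).1 h0
      have hp' : p = s * x1 := by rw [← hpd, ht]; ring
      rw [hp']
      refine Nat.mul_le_mul_right _ (Nat.le_of_dvd ?_ h2)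
      rcases Nat.eq_zero_or_pos s with h3 | h3
      · rw [h3] at hp'; omega
      · exact h3
end

section
/- If x₁ ≥ 2·x₂ or x₂ ≥ 2·x₁, then the Lengyel transfer game L(b;x₁,y₁;x₂,y₂) is diagonally periodic: SG*(x,y) = SG*(x + x₁ + x₂, y − y₁ − y₂) for all (x,y) ∈ ℕ×ℕ with y ≥ y₁ + y₂. -/
/-- Truncated mex of three truncated values; the value `2` also encodes a missing option. -/
def M3 (d a c : ℕ) : ℕ :=
  if d ≠ 0 ∧ a ≠ 0 ∧ c ≠ 0 then 0 else if d ≠ 1 ∧ a ≠ 1 ∧ c ≠ 1 then 1 else 2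

/-- Swap `0` and `1`, fix everything else. -/
def gsw (a : ℕ) : ℕ := if a = 0 then 1 else if a = 1 then 0 else a

theorem min_mex_two (S : Set ℕ) :
    ((0 ∉ S) → min (mex S) 2 = 0) ∧ (0 ∈ S → 1 ∉ S → min (mex S) 2 = 1) ∧
    (0 ∈ S → 1 ∈ S → S.Finite → min (mex S) 2 = 2) := by
  refine ⟨fun h => ?_, fun h0 h1 => ?_, fun h0 h1 hf => ?_⟩
  · have : mex S ≤ 0 := Nat.sInf_le h
    omega
  · have h2 : mex S ≤ 1 := Nat.sInf_le h1
    have h3 : mex S ∈ {n : ℕ | n ∉ S} := Nat.sInf_mem ⟨1, h1⟩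
    have h4 : mex S ≠ 0 := by
      intro h; rw [h] at h3; exact h3 h0
    omega
  · obtain ⟨n, hn⟩ := hf.exists_notMem
    have h3 : mex S ∈ {n : ℕ | n ∉ S} := Nat.sInf_mem ⟨n, hn⟩
    have h4 : mex S ≠ 0 := by
      intro h; rw [h] at h3; exact h3 h0
    have h5 : mex S ≠ 1 := by
      intro h; rw [h] at h3; exact h3 h1
    omega

/-- The truncated recurrence. -/
def Rec3 (b x1 y1 x2 y2 : ℕ) (f : ℕ → ℕ → ℕ) : Prop :=
  ∀ x y : ℕ, f x y = M3 (if b ≤ y then f x (y - b) else 2)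
    (if x1 ≤ x then f (x - x1) (y + y1) else 2) (if x2 ≤ x then f (x - x2) (y + y2) else 2)

theorem rec3_of_SG {b x1 y1 x2 y2 : ℕ} {SG : ℕ → ℕ → ℕ} (h : IsLengyelSG b x1 y1 x2 y2 SG) :
    Rec3 b x1 y1 x2 y2 (fun x y => min (SG x y) 2) := by
  intro x y
  have key := h x y
  set S := ((if b ≤ y then ({SG x (y - b)} : Set ℕ) else ∅) ∪
     (if x1 ≤ x then ({SG (x - x1) (y + y1)} : Set ℕ) else ∅) ∪
     (if x2 ≤ x then ({SG (x - x2) (y + y2)} : Set ℕ) else ∅)) with hS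
  have hfin : S.Finite := by
    rw [hS]
    refine Set.Finite.union (Set.Finite.union ?_ ?_) ?_ <;> split_ifs <;> simp
  have hmem : ∀ k, k ∈ S ↔ (b ≤ y ∧ SG x (y - b) = k) ∨ (x1 ≤ x ∧ SG (x - x1) (y + y1) = k) ∨
      (x2 ≤ x ∧ SG (x - x2) (y + y2) = k) := by
    intro k
    rw [hS]
    by_cases c1 : b ≤ y <;> by_cases c2 : x1 ≤ x <;> by_cases c3 : x2 ≤ x <;>
      simp [c1, c2, c3] <;> grind
  obtain ⟨m0, m1, m2⟩ := min_mex_two S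
  have k0 := hmem 0
  have k1 := hmem 1
  show min (SG x y) 2 = _
  rw [key]
  unfold M3
  by_cases z0 : 0 ∈ S
  · by_cases z1 : 1 ∈ S
    · rw [m2 z0 z1 hfin]
      have k0 := k0.1 z0
      have k1 := k1.1 z1
      clear hmem key hS hfin m0 m1 m2
      grind
    · rw [m1 z0 z1]
      have k0 := k0.1 z0
      have k1 := fun h => z1 (k1.2 h)
      clear hmem key hS hfin m0 m1 m2
      grind
  · rw [m0 z0]
    have k0 := fun h => z0 (k0.2 h)
    clear hmem key hS hfin m0 m1 m2 k1
    grind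

theorem M3_le (d a c : ℕ) : M3 d a c ≤ 2 := by
  unfold M3; split_ifs <;> omega

theorem M3_swap (d a c : ℕ) : M3 d a c = M3 d c a := by
  unfold M3; grind

section
variable {b x1 y1 x2 y2 : ℕ} {f : ℕ → ℕ → ℕ}

theorem rec3_le (h : Rec3 b x1 y1 x2 y2 f) (x y : ℕ) : f x y ≤ 2 := by
  rw [h x y]; exact M3_le _ _ _

theorem alt_step (d a c e : ℕ) (ha : a ≤ 2) (hc : c ≤ 2) (hd : d ≤ 2) (he : e = M3 d a c)
    (h : d = 2 ∨ e = gsw d) : M3 e (gsw a) (gsw c) = gsw e := by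
  subst he
  interval_cases d <;> interval_cases a <;> interval_cases c <;> revert h <;> decide

theorem alt (hb : 0 < b) (hx1 : 0 < x1) (hx2 : 0 < x2) (h : Rec3 b x1 y1 x2 y2 f) :
    ∀ x y, f x (y + b) = gsw (f x y) := by
  intro x
  induction x using Nat.strong_induction_on with
  | _ x ihx =>
    intro y
    induction y using Nat.strong_induction_on with
    | _ y ihy =>
      have e1 := h x (y + b)
      have eA : (if x1 ≤ x then f (x - x1) (y + b + y1) else 2)
          = gsw (if x1 ≤ x then f (x - x1) (y + y1) else 2) := by
        split_ifs with hc
        · rw [← ihx (x - x1) (by omega)]; congr 1; omega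
        · rfl
      have eB : (if x2 ≤ x then f (x - x2) (y + b + y2) else 2)
          = gsw (if x2 ≤ x then f (x - x2) (y + y2) else 2) := by
        split_ifs with hc
        · rw [← ihx (x - x2) (by omega)]; congr 1; omega
        · rfl
      rw [eA, eB, if_pos (by omega), Nat.add_sub_cancel] at e1
      rw [e1]
      refine alt_step _ _ _ _ ?_ ?_ ?_ (h x y) ?_
      · split_ifs
        · exact rec3_le h _ _
        · exact le_rfl
      · split_ifs
        · exact rec3_le h _ _
        · exact le_rfl
      · split_ifs
        · exact rec3_le h _ _
        · exact le_rfl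
      · split_ifs with hc
        · right
          have := ihy (y - b) (by omega)
          rwa [Nat.sub_add_cancel hc] at this
        · left; rfl

/-- The value is determined by the two sideways options, unless both are `2`. -/
theorem val (hb : 0 < b) (hx1 : 0 < x1) (hx2 : 0 < x2) (h : Rec3 b x1 y1 x2 y2 f)
    (x y A C : ℕ) (hA : A = if x1 ≤ x then f (x - x1) (y + y1) else 2)
    (hC : C = if x2 ≤ x then f (x - x2) (y + y2) else 2) (hne : ¬ (A = 2 ∧ C = 2)) :
    f x y = M3 2 A C := by
  have hA2 : A ≤ 2 := by
    rw [hA]; split_ifs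
    · exact rec3_le h _ _
    · exact le_rfl
  have hC2 : C ≤ 2 := by
    rw [hC]; split_ifs
    · exact rec3_le h _ _
    · exact le_rfl
  have e := h x y
  rw [← hA, ← hC] at e
  by_cases hc : b ≤ y
  · rw [if_pos hc] at e
    have e2 := alt hb hx1 hx2 h x (y - b)
    rw [Nat.sub_add_cancel hc] at e2
    have hd := rec3_le h x (y - b)
    rw [e] at e2 ⊢
    generalize f x (y - b) = d at *
    clear hA hC e
    interval_cases d <;> interval_cases A <;> interval_cases C <;> revert e2 hne <;> decide
  · rw [if_neg hc] at e; exact e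

theorem ne_two (hb : 0 < b) (hx1 : 0 < x1) (hx2 : 0 < x2) (h : Rec3 b x1 y1 x2 y2 f)
    (x y : ℕ) (hx : x < x1) : f x y ≠ 2 := by
  have e := h x y
  rw [if_neg (by omega : ¬ x1 ≤ x)] at e
  generalize hC : (if x2 ≤ x then f (x - x2) (y + y2) else 2) = C at e
  have hC2 : C ≤ 2 := by
    rw [← hC]; split_ifs
    · exact rec3_le h _ _
    · exact le_rfl
  clear hC
  by_cases hc : b ≤ y
  · rw [if_pos hc] at e
    have e2 := alt hb hx1 hx2 h x (y - b)
    rw [Nat.sub_add_cancel hc] at e2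
    have hd := rec3_le h x (y - b)
    rw [e] at e2 ⊢
    generalize f x (y - b) = d at *
    clear e
    interval_cases d <;> interval_cases C <;> revert e2 <;> decide
  · rw [if_neg hc] at e
    rw [e]
    clear e
    interval_cases C <;> decide

theorem two_mod (hb : 0 < b) (hx1 : 0 < x1) (hx2 : 0 < x2) (h : Rec3 b x1 y1 x2 y2 f) (X : ℕ)
    (per : ∀ x < X, ∀ w, f x (w + y1 + y2) = f (x + x1 + x2) w) :
    ∀ z < X, ∀ w, f z w = 2 → x1 ≤ z % (x1 + x2) := by
  intro z
  induction z using Nat.strong_induction_on with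
  | _ z ih =>
    intro hz w hw
    by_cases hN : z < x1 + x2
    · rw [Nat.mod_eq_of_lt hN]
      by_contra hlt
      exact ne_two hb hx1 hx2 h z w (by omega) hw
    · have p := per (z - (x1 + x2)) (by omega) w
      rw [show z - (x1 + x2) + x1 + x2 = z by omega, hw] at p
      have := ih (z - (x1 + x2)) (by omega) (by omega) _ p
      rwa [← Nat.mod_eq_sub_mod (by omega)] at this

theorem not_both (hx2 : 0 < x2) (hr : 2 * x2 ≤ x1) (x : ℕ) (hx : x1 ≤ x)
    (h1 : x1 ≤ (x - x1) % (x1 + x2)) (h2 : x1 ≤ (x - x2) % (x1 + x2)) : False := by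
  have hlt := Nat.mod_lt (x - x1) (show x1 + x2 > 0 by omega)
  have hdm := Nat.div_add_mod (x - x1) (x1 + x2)
  generalize (x - x1) % (x1 + x2) = r at *
  generalize (x - x1) / (x1 + x2) = q at *
  have e : x - x2 = (r - 2 * x2) + (x1 + x2) * (q + 1) := by
    rw [mul_add, mul_one]
    generalize (x1 + x2) * q = t at *
    omega
  rw [e, Nat.add_mul_mod_self_left, Nat.mod_eq_of_lt (by omega)] at h2
  omega

/-- A sideways option never has the value of the position, if that value is `0` or `1`. -/
theorem optA_ne (h : Rec3 b x1 y1 x2 y2 f) (x y : ℕ) (hne : f x (y + y1) ≠ 2) :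
    f (x + x1) y ≠ f x (y + y1) := by
  have e := h (x + x1) y
  rw [if_pos (by omega : x1 ≤ x + x1), Nat.add_sub_cancel] at e
  intro h'
  rw [h'] at e
  unfold M3 at e
  grind

theorem rec3_swap (h : Rec3 b x1 y1 x2 y2 f) : Rec3 b x2 y2 x1 y1 f := by
  intro x y
  rw [h x y, M3_swap]

theorem period (hb : 0 < b) (hx1 : 0 < x1) (hx2 : 0 < x2) (hr : 2 * x2 ≤ x1)
    (h : Rec3 b x1 y1 x2 y2 f) :
    ∀ x w, f x (w + y1 + y2) = f (x + x1 + x2) w := by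
  intro x
  induction x using Nat.strong_induction_on with
  | _ x ih =>
    intro w
    have hQ := val hb hx1 hx2 h (x + x1 + x2) w (f (x + x2) (w + y1)) (f (x + x1) (w + y2))
      (by rw [if_pos (by omega)]; congr 1; omega) (by rw [if_pos (by omega)]; congr 1; omega)
    have hR2 := rec3_le h (x + x2) (w + y1)
    have hS2 := rec3_le h (x + x1) (w + y2)
    have hP2 := rec3_le h x (w + y1 + y2)
    by_cases c1 : x1 ≤ x
    · have eA := ih (x - x1) (by omega) (w + y1)
      have eB := ih (x - x2) (by omega) (w + y2)
      rw [show x - x1 + x1 + x2 = x + x2 by omega,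
        show w + y1 + y1 + y2 = w + y1 + y2 + y1 by omega] at eA
      rw [show x - x2 + x1 + x2 = x + x1 by omega,
        show w + y2 + y1 + y2 = w + y1 + y2 + y2 by omega] at eB
      have hne : ¬ (f (x + x2) (w + y1) = 2 ∧ f (x + x1) (w + y2) = 2) := by
        rintro ⟨h1, h2⟩
        rw [← eA] at h1
        rw [← eB] at h2
        have tm := two_mod hb hx1 hx2 h x ih
        exact not_both hx2 hr x c1 (tm _ (by omega) _ h1) (tm _ (by omega) _ h2)
      rw [hQ hne]
      refine val hb hx1 hx2 h x _ _ _ ?_ ?_ hne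
      · rw [if_pos c1, eA]
      · rw [if_pos (by omega), eB]
    · have hP := ne_two hb hx1 hx2 h x (w + y1 + y2) (by omega)
      have hR := optA_ne (rec3_swap h) x (w + y1) hP
      rw [show w + y1 + y2 = w + y2 + y1 by omega] at hP
      have hS := optA_ne h x (w + y2) hP
      rw [show w + y2 + y1 = w + y1 + y2 by omega] at hP hS
      have hor : f (x + x1) (w + y2) ≠ 2 ∨ f (x + x2) (w + y1) ≠ 2 := by
        by_cases c2 : x2 ≤ x
        · left
          have eB := ih (x - x2) (by omega) (w + y2)
          rw [show x - x2 + x1 + x2 = x + x1 by omega] at eB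
          rw [← eB]
          exact ne_two hb hx1 hx2 h _ _ (by omega)
        · right
          exact ne_two hb hx1 hx2 h _ _ (by omega)
      rw [hQ (by omega)]
      generalize f x (w + y1 + y2) = p at *
      generalize f (x + x1) (w + y2) = s at *
      generalize f (x + x2) (w + y1) = r at *
      clear hQ ih
      interval_cases p <;> interval_cases r <;> interval_cases s <;>
        revert hP hR hS hor <;> decide

end

/-- If `x₁ ≥ 2x₂` or `x₂ ≥ 2x₁`, then `L(b;x₁,y₁;x₂,y₂)` is diagonally periodic:
`SG*(x,y) = SG*(x+x₁+x₂, y−y₁−y₂)` whenever `y ≥ y₁+y₂`, where `SG* = min(SG, 2)`. -/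
theorem diagonal_periodicity_of_ratio (b x1 x2 y1 y2 : ℕ)
    (hb : 0 < b) (hx1 : 0 < x1) (hx2 : 0 < x2)
    (hratio : 2 * x2 ≤ x1 ∨ 2 * x1 ≤ x2)
    (SG : ℕ → ℕ → ℕ) (hSG : IsLengyelSG b x1 y1 x2 y2 SG) :
    ∀ x y : ℕ, y1 + y2 ≤ y →
      min (SG x y) 2 = min (SG (x + x1 + x2) (y - (y1 + y2))) 2 := by
  have h := rec3_of_SG hSG
  intro x y hy
  obtain ⟨w, rfl⟩ := Nat.exists_eq_add_of_le hy
  rw [Nat.add_sub_cancel_left]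
  rcases hratio with hr | hr
  · have p := period hb hx1 hx2 hr h x w
    rw [show y1 + y2 + w = w + y1 + y2 by omega]
    exact p
  · have p := period hb hx2 hx1 hr (rec3_swap h) x w
    rw [show y1 + y2 + w = w + y2 + y1 by omega, show x + x1 + x2 = x + x2 + x1 by omega]
    exact p
end

section
/- If the Lengyel transfer game L(b;x₁,y₁;x₂,y₂) has no bad pairs of 2s among positions whose first coordinates are at least x₀ (i.e. there is no bad pair of 2s (x,y), (x′,y′) with x ≥ x₀ and x′ ≥ x₀), then it has diagonal periodicity after x₀ + max{x₁,x₂}: SG*(x,y) = SG*(x + x₁ + x₂, y − y₁ − y₂) for all (x,y) with x ≥ x₀ + max{x₁,x₂} and y ≥ y₁ + y₂. -/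
theorem mex_eq_zero_iff_aux (S : Set ℕ) (hS : S.Finite) : mex S = 0 ↔ 0 ∉ S := by
  unfold mex
  have hne : {n : ℕ | n ∉ S} ≠ ∅ := by
    have := hS.infinite_compl.nonempty
    exact this.ne_empty
  rw [Nat.sInf_eq_zero]
  simp [hne]

theorem mex_eq_one_iff_aux (S : Set ℕ) (hS : S.Finite) : mex S = 1 ↔ 0 ∈ S ∧ 1 ∉ S := by
  have h0 := mex_eq_zero_iff_aux S hS
  have hmem : mex S ∉ S := Nat.sInf_mem (s := {n : ℕ | n ∉ S}) hS.infinite_compl.nonempty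
  constructor
  · intro h
    rw [h] at hmem
    refine ⟨?_, hmem⟩
    by_contra hc
    have := h0.2 hc
    omega
  · rintro ⟨ha, hb⟩
    have hle : mex S ≤ 1 := Nat.sInf_le (s := {n : ℕ | n ∉ S}) hb
    have : mex S ≠ 0 := fun h => h0.1 h ha
    omega

/-- `v` is the (truncated) value of some option of `(x,y)`. -/
def OptAux (b x1 y1 x2 y2 : ℕ) (t : ℕ → ℕ → ℕ) (x y v : ℕ) : Prop :=
  (b ≤ y ∧ t x (y - b) = v) ∨ (x1 ≤ x ∧ t (x - x1) (y + y1) = v) ∨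
    (x2 ≤ x ∧ t (x - x2) (y + y2) = v)

theorem star_rec_aux (b x1 y1 x2 y2 : ℕ) (SG : ℕ → ℕ → ℕ) (hSG : IsLengyelSG b x1 y1 x2 y2 SG)
    (t : ℕ → ℕ → ℕ) (ht : ∀ x y, t x y = min (SG x y) 2) (x y : ℕ) :
    (t x y = 0 ↔ ¬ OptAux b x1 y1 x2 y2 t x y 0) ∧
    (t x y = 1 ↔ OptAux b x1 y1 x2 y2 t x y 0 ∧ ¬ OptAux b x1 y1 x2 y2 t x y 1) := by
  have e0 : ∀ x y, t x y = 0 ↔ SG x y = 0 := by intro x y; rw [ht]; omega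
  have e1 : ∀ x y, t x y = 1 ↔ SG x y = 1 := by intro x y; rw [ht]; omega
  have h := hSG x y
  set S : Set ℕ := ((if b ≤ y then ({SG x (y - b)} : Set ℕ) else ∅) ∪
     (if x1 ≤ x then ({SG (x - x1) (y + y1)} : Set ℕ) else ∅) ∪
     (if x2 ≤ x then ({SG (x - x2) (y + y2)} : Set ℕ) else ∅)) with hSdef
  have hfin : S.Finite := by
    rw [hSdef]
    refine (Set.Finite.union (Set.Finite.union ?_ ?_) ?_) <;> split_ifs <;> simp
  have hm : ∀ v, v ∈ S ↔ (b ≤ y ∧ SG x (y - b) = v) ∨ (x1 ≤ x ∧ SG (x - x1) (y + y1) = v) ∨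
      (x2 ≤ x ∧ SG (x - x2) (y + y2) = v) := by
    intro v
    rw [hSdef]
    split_ifs <;> simp [*, eq_comm] <;> tauto
  unfold OptAux
  simp only [e0, e1]
  rw [h, mex_eq_zero_iff_aux S hfin, mex_eq_one_iff_aux S hfin, hm, hm]
  exact ⟨Iff.rfl, Iff.rfl⟩

/-- Every residue column of `SG*` either alternates between 0 and 1 or is constantly 2. -/
theorem flip_aux (b x1 y1 x2 y2 : ℕ) (hx1 : 0 < x1) (hx2 : 0 < x2) (hb : 0 < b)
    (t : ℕ → ℕ → ℕ) (ht : ∀ x y, t x y ≤ 2)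
    (h : ∀ x y, (t x y = 0 ↔ ¬ OptAux b x1 y1 x2 y2 t x y 0) ∧
    (t x y = 1 ↔ OptAux b x1 y1 x2 y2 t x y 0 ∧ ¬ OptAux b x1 y1 x2 y2 t x y 1)) :
    ∀ x y, (t x y = 0 → t x (y + b) = 1) ∧ (t x y = 1 → t x (y + b) = 0) ∧
      (t x y = 2 → t x (y + b) = 2) := by
  intro x
  induction x using Nat.strong_induction_on with
  | _ x ihx =>
  intro y
  induction y using Nat.strong_induction_on with
  | _ y ihy =>
  have hP := h x y
  have hU := h x (y + b)
  have tP := ht x y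
  have tU := ht x (y + b)
  have hD : b ≤ y → (t x (y - b) = 0 → t x y = 1) ∧ (t x (y - b) = 1 → t x y = 0) ∧
      (t x (y - b) = 2 → t x y = 2) := by
    intro hby
    have := ihy (y - b) (by omega)
    rwa [Nat.sub_add_cancel hby] at this
  have tD := ht x (y - b)
  have i1 : x1 ≤ x → _ := fun hx => ihx (x - x1) (by omega) (y + y1)
  have i2 : x2 ≤ x → _ := fun hx => ihx (x - x2) (by omega) (y + y2)
  have t1 := ht (x - x1) (y + y1)
  have t2 := ht (x - x2) (y + y2)
  unfold OptAux at hP hU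
  rw [Nat.add_sub_cancel, show y + b + y1 = y + y1 + b by omega,
    show y + b + y2 = y + y2 + b by omega] at hU
  have hbU : b ≤ y + b := by omega
  generalize t x (y + b) = u at *
  generalize t x y = p at *
  generalize t x (y - b) = d at *
  generalize t (x - x1) (y + y1 + b) = u1 at *
  generalize t (x - x2) (y + y2 + b) = u2 at *
  generalize t (x - x1) (y + y1) = p1 at *
  generalize t (x - x2) (y + y2) = p2 at *
  clear ihx ihy h ht
  by_cases c1 : x1 ≤ x <;> by_cases c2 : x2 ≤ x <;> by_cases c3 : b ≤ y <;>
    simp only [c1, c2, c3, hbU, true_and, false_and, false_or, or_false, true_imp_iff,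
      false_imp_iff, not_false_eq_true, iff_true, and_true, true_iff] at * <;>
    omega

/-- Local consequences: no option shares a value below 2, and a 2 has both a 0 and a 1
among its two transfer options. -/
theorem local_aux (b x1 y1 x2 y2 : ℕ) (hx1 : 0 < x1) (hx2 : 0 < x2) (hb : 0 < b)
    (t : ℕ → ℕ → ℕ) (ht : ∀ x y, t x y ≤ 2)
    (h : ∀ x y, (t x y = 0 ↔ ¬ OptAux b x1 y1 x2 y2 t x y 0) ∧
    (t x y = 1 ↔ OptAux b x1 y1 x2 y2 t x y 0 ∧ ¬ OptAux b x1 y1 x2 y2 t x y 1))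
    (x y r p1 p2 : ℕ) (h1 : x1 ≤ x) (h2 : x2 ≤ x) (hr : t x y = r)
    (hp1 : t (x - x1) (y + y1) = p1) (hp2 : t (x - x2) (y + y2) = p2) :
    (r = 0 → p1 ≠ 0 ∧ p2 ≠ 0) ∧ (r = 1 → p1 ≠ 1 ∧ p2 ≠ 1) ∧
    (r = 2 → (p1 = 0 ∧ p2 = 1) ∨ (p1 = 1 ∧ p2 = 0)) ∧ r ≤ 2 := by
  have hP := h x y
  have tP := ht x y
  have hD : b ≤ y → (t x (y - b) = 0 → t x y = 1) ∧ (t x (y - b) = 1 → t x y = 0) ∧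
      (t x (y - b) = 2 → t x y = 2) := by
    intro hby
    have := flip_aux b x1 y1 x2 y2 hx1 hx2 hb t ht h x (y - b)
    rwa [Nat.sub_add_cancel hby] at this
  have tD := ht x (y - b)
  have t1 := ht (x - x1) (y + y1)
  have t2 := ht (x - x2) (y + y2)
  unfold OptAux at hP
  rw [hr, hp1, hp2] at *
  generalize t x (y - b) = d at *
  clear h ht
  by_cases c3 : b ≤ y <;>
    simp only [h1, h2, c3, true_and, false_and, false_or, or_false, true_imp_iff] at * <;>
    omega

/-- If `L(b;x₁,y₁;x₂,y₂)` has no bad pairs of 2s among positions with first coordinate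
at least `x₀` — i.e. no positions `(x,y)`, `(x',y')` with `x, x' ≥ x₀`,
`SG*(x,y) = SG*(x',y') = 2`, `x − x' = x₁ − x₂` and `y − y' = y₂ − y₁` (as integers) —
then it has diagonal periodicity after `x₀ + max{x₁,x₂}`. -/
theorem no_bad_pairs_implies_diagonal_periodicity (b x1 x2 y1 y2 x0 : ℕ)
    (hb : 0 < b) (hx1 : 0 < x1) (hx2 : 0 < x2)
    (SG : ℕ → ℕ → ℕ) (hSG : IsLengyelSG b x1 y1 x2 y2 SG)
    (hnobad : ¬ ∃ x y x' y' : ℕ, x0 ≤ x ∧ x0 ≤ x' ∧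
      min (SG x y) 2 = 2 ∧ min (SG x' y') 2 = 2 ∧
      (x : ℤ) - (x' : ℤ) = (x1 : ℤ) - (x2 : ℤ) ∧ (y : ℤ) - (y' : ℤ) = (y2 : ℤ) - (y1 : ℤ)) :
    ∀ x y : ℕ, x0 + max x1 x2 ≤ x → y1 + y2 ≤ y →
      min (SG x y) 2 = min (SG (x + x1 + x2) (y - (y1 + y2))) 2 := by
  intro x y hx hy
  obtain ⟨t, ht⟩ : ∃ t : ℕ → ℕ → ℕ, ∀ x y, t x y = min (SG x y) 2 := ⟨_, fun _ _ => rfl⟩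
  have hrec := star_rec_aux b x1 y1 x2 y2 SG hSG t ht
  have hle : ∀ x y, t x y ≤ 2 := fun x y => by rw [ht]; omega
  simp only [← ht] at hnobad ⊢
  have loc := local_aux b x1 y1 x2 y2 hx1 hx2 hb t hle hrec
  have hm1 : x1 ≤ max x1 x2 := le_max_left _ _
  have hm2 : x2 ≤ max x1 x2 := le_max_right _ _
  have nb : ∀ x y x' y' : ℕ, x0 ≤ x → x0 ≤ x' → x + x2 = x' + x1 → y + y1 = y' + y2 →
      ¬ (t x y = 2 ∧ t x' y' = 2) := by
    rintro x y x' y' a1 a2 a3 a4 ⟨a5, a6⟩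
    exact hnobad ⟨x, y, x', y', a1, a2, a5, a6, by omega, by omega⟩
  generalize hq : t (x + x1 + x2) (y - (y1 + y2)) = q
  generalize hp : t x y = p
  generalize hA : t (x + x2) (y - y2) = vA
  generalize hB : t (x + x1) (y - y1) = vB
  generalize hE : t (x + x2 - x1) (y - y2 + y1) = vE
  generalize hF : t (x + x1 - x2) (y - y1 + y2) = vF
  generalize hP1 : t (x - x1) (y + y1) = v1
  generalize hP2 : t (x - x2) (y + y2) = v2
  have L1 := loc x y p v1 v2 (by omega) (by omega) hp hP1 hP2
  have LQ := loc (x + x1 + x2) (y - (y1 + y2)) q vA vB (by omega) (by omega) hq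
    (by rw [← hA]; congr 1 <;> omega) (by rw [← hB]; congr 1 <;> omega)
  have LA := loc (x + x2) (y - y2) vA vE p (by omega) (by omega) hA hE
    (by rw [← hp]; congr 1 <;> omega)
  have LB := loc (x + x1) (y - y1) vB p vF (by omega) (by omega) hB
    (by rw [← hp]; congr 1 <;> omega) hF
  have LE : (vE = 0 → v1 ≠ 0) ∧ (vE = 1 → v1 ≠ 1) := by
    have h := hrec (x + x2 - x1) (y - y2 + y1)
    have e : t (x + x2 - x1 - x2) (y - y2 + y1 + y2) = v1 := by
      rw [← hP1]; congr 1 <;> omega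
    unfold OptAux at h
    rw [e, hE] at h
    exact ⟨fun h0 hv => h.1.1 h0 (Or.inr (Or.inr ⟨by omega, hv⟩)),
      fun h0 hv => (h.2.1 h0).2 (Or.inr (Or.inr ⟨by omega, hv⟩))⟩
  have LF : (vF = 0 → v2 ≠ 0) ∧ (vF = 1 → v2 ≠ 1) := by
    have h := hrec (x + x1 - x2) (y - y1 + y2)
    have e : t (x + x1 - x2 - x1) (y - y1 + y2 + y1) = v2 := by
      rw [← hP2]; congr 1 <;> omega
    unfold OptAux at h
    rw [e, hF] at h
    exact ⟨fun h0 hv => h.1.1 h0 (Or.inr (Or.inl ⟨by omega, hv⟩)),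
      fun h0 hv => (h.2.1 h0).2 (Or.inr (Or.inl ⟨by omega, hv⟩))⟩
  have tE : vE ≤ 2 := hE ▸ hle _ _
  have tF : vF ≤ 2 := hF ▸ hle _ _
  have nAB := nb (x + x1) (y - y1) (x + x2) (y - y2) (by omega) (by omega) (by omega) (by omega)
  have nPE := nb x y (x + x2 - x1) (y - y2 + y1) (by omega) (by omega) (by omega) (by omega)
  have nPF := nb (x + x1 - x2) (y - y1 + y2) x y (by omega) (by omega) (by omega) (by omega)
  rw [hA, hB] at nAB
  rw [hp, hE] at nPE
  rw [hp, hF] at nPF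
  clear hrec loc nb hnobad hSG ht hle hq hp hA hB hE hF hP1 hP2
  have c : p = 0 ∨ p = 1 ∨ p = 2 := by omega
  rcases c with rfl | rfl | rfl
  · clear L1 LE LF nPE nPF
    have hA0 := LA.1
    omega
  · clear L1 LE LF nPE nPF
    omega
  · have hE2 : vE ≠ 2 := by omega
    have hF2 : vF ≠ 2 := by omega
    have h12 := L1.2.2.1 rfl
    have hA2 : vA ≠ 2 := by omega
    have hB2 : vB ≠ 2 := by omega
    rcases h12 with ⟨rfl, rfl⟩ | ⟨rfl, rfl⟩
    · have : vE = 1 := by omega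
      have : vF = 0 := by omega
      have : vA = 0 := by omega
      have : vB = 1 := by omega
      omega
    · have : vE = 0 := by omega
      have : vF = 1 := by omega
      have : vA = 1 := by omega
      have : vB = 0 := by omega
      omega
end

section
/- Suppose (b,x₁) ≠ (1,1). Then the Lengyel transfer game L(b;x₁,0;1,1) has diagonal periodicity: SG*(x,y) = SG*(x + x₁ + 1, y − 1) for all (x,y) ∈ ℕ×ℕ with y ≥ 1. -/
theorem mex_eq_zero_iff' (S : Set ℕ) (hS : ∃ n, n ∉ S) : mex S = 0 ↔ 0 ∉ S := by
  unfold mex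
  constructor
  · intro h
    have := Nat.sInf_mem (s := {n : ℕ | n ∉ S}) hS
    rw [h] at this
    exact this
  · intro h
    exact Nat.le_zero.mp (Nat.sInf_le (s := {n : ℕ | n ∉ S}) h)

theorem mex_eq_one_iff' (S : Set ℕ) (hS : ∃ n, n ∉ S) : mex S = 1 ↔ 0 ∈ S ∧ 1 ∉ S := by
  have h0 := mex_eq_zero_iff' S hS
  constructor
  · intro h
    refine ⟨by_contra fun hc => ?_, ?_⟩
    · have := h0.2 hc
      omega
    · have := Nat.sInf_mem (s := {n : ℕ | n ∉ S}) hS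
      change mex S ∉ S at this
      rwa [h] at this
  · rintro ⟨h, h1⟩
    have h2 : mex S ≤ 1 := Nat.sInf_le (s := {n : ℕ | n ∉ S}) h1
    have h3 : mex S ≠ 0 := fun hc => (h0.1 hc) h
    omega

theorem lengyel_zero_one (b k : ℕ) (SG : ℕ → ℕ → ℕ) (hSG : IsLengyelSG b k 0 1 1 SG) (x y : ℕ) :
    (SG x y = 0 ↔ ¬ ((b ≤ y ∧ SG x (y - b) = 0) ∨ (k ≤ x ∧ SG (x - k) y = 0) ∨
      (1 ≤ x ∧ SG (x - 1) (y + 1) = 0))) ∧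
    (SG x y = 1 ↔ ((b ≤ y ∧ SG x (y - b) = 0) ∨ (k ≤ x ∧ SG (x - k) y = 0) ∨
      (1 ≤ x ∧ SG (x - 1) (y + 1) = 0)) ∧ ¬ ((b ≤ y ∧ SG x (y - b) = 1) ∨
      (k ≤ x ∧ SG (x - k) y = 1) ∨ (1 ≤ x ∧ SG (x - 1) (y + 1) = 1))) := by
  have key : ∀ v : ℕ, v ∈ ((if b ≤ y then ({SG x (y - b)} : Set ℕ) else ∅) ∪
     (if k ≤ x then ({SG (x - k) (y + 0)} : Set ℕ) else ∅) ∪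
     (if 1 ≤ x then ({SG (x - 1) (y + 1)} : Set ℕ) else ∅)) ↔
     ((b ≤ y ∧ SG x (y - b) = v) ∨ (k ≤ x ∧ SG (x - k) y = v) ∨
      (1 ≤ x ∧ SG (x - 1) (y + 1) = v)) := by
    intro v
    split_ifs <;> simp [*, eq_comm] <;> tauto
  have hex : ∃ n, n ∉ ((if b ≤ y then ({SG x (y - b)} : Set ℕ) else ∅) ∪
     (if k ≤ x then ({SG (x - k) (y + 0)} : Set ℕ) else ∅) ∪
     (if 1 ≤ x then ({SG (x - 1) (y + 1)} : Set ℕ) else ∅)) := by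
    refine ⟨SG x (y - b) + SG (x - k) y + SG (x - 1) (y + 1) + 1, ?_⟩
    rw [key]
    omega
  have h := hSG x y
  rw [h, mex_eq_zero_iff' _ hex, mex_eq_one_iff' _ hex, key, key]
  exact ⟨Iff.rfl, Iff.rfl⟩

/-- value for small `e` -/
def lenA (b e n : ℕ) : ℕ := (e + (e + n) / b) % 2

/-- explicit value of `SG*` -/
def lenF (b k e n : ℕ) : ℕ :=
  if e < k then lenA b e n
  else if lenA b (k - 1) (n + 1) = lenA b 0 n then 1 - lenA b 0 n else 2

theorem lenA_le (b e n : ℕ) : lenA b e n ≤ 1 := by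
  unfold lenA; omega

theorem lenA_succ (b e n : ℕ) : lenA b (e + 1) n = 1 - lenA b e (n + 1) := by
  unfold lenA
  rw [show e + 1 + n = e + (n + 1) by ring]
  omega

theorem lenA_add (b e n : ℕ) (hb : 0 < b) : lenA b e (n + b) = 1 - lenA b e n := by
  unfold lenA
  rw [show e + (n + b) = e + n + b by ring, Nat.add_div_right _ hb]
  omega

theorem lenA_small (b n : ℕ) (h : n < b) : lenA b 0 n = 0 := by
  unfold lenA
  simp [Nat.div_eq_of_lt h]

theorem lenF_add (b k e n : ℕ) (hb : 0 < b) :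
    (lenF b k e n = 2 ∧ lenF b k e (n + b) = 2) ∨
    (lenF b k e n ≤ 1 ∧ lenF b k e (n + b) = 1 - lenF b k e n) := by
  have h1 := lenA_add b e n hb
  have h2 := lenA_add b (k-1) (n+1) hb
  have h3 := lenA_add b 0 n hb
  have h4 := lenA_le b e n
  have h5 := lenA_le b (k-1) (n+1)
  have h6 := lenA_le b 0 n
  unfold lenF
  rw [show n + b + 1 = n + 1 + b by ring]
  split_ifs <;> omega

theorem len_k1 (b n : ℕ) (hb : 2 ≤ b) :
    lenF b 1 1 n = 1 - lenA b 0 (n + 1) ∨ lenF b 1 1 (n + 1) = 1 - lenA b 0 (n + 1) := by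
  have a1 := lenA_le b 0 n
  have a2 := lenA_le b 0 (n+1)
  have a3 := lenA_le b 0 (n+1+1)
  have : lenA b 0 n = lenA b 0 (n+1) ∨ lenA b 0 (n+1) = lenA b 0 (n+1+1) := by
    unfold lenA
    simp only [zero_add]
    have h1 := Nat.div_le_div_right (c := b) (show n ≤ n+1 by omega)
    have h2 := Nat.div_le_div_right (c := b) (show n+1 ≤ n+1+1 by omega)
    have h3 : (n+1+1)/b ≤ (n+b)/b := Nat.div_le_div_right (by omega)
    rw [Nat.add_div_right _ (by omega)] at h3
    have : n / b = (n+1)/b ∨ (n+1)/b = (n+1+1)/b := by omega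
    rcases this with h | h
    · left; rw [h]
    · right; rw [h]
  unfold lenF
  simp only [lt_irrefl, if_false, Nat.sub_self]
  split_ifs <;> omega

theorem len_step (b k : ℕ) (hb : 0 < b) (hk : 0 < k) (hne : ¬ (b = 1 ∧ k = 1))
    (SG : ℕ → ℕ → ℕ) (hSG : IsLengyelSG b k 0 1 1 SG) (x y : ℕ)
    (ihy : b ≤ y → min (SG x (y - b)) 2 = lenF b k (x % (k+1)) (y - b + x / (k+1)))
    (ihx : ∀ x' < x, ∀ y, min (SG x' y) 2 = lenF b k (x' % (k+1)) (y + x' / (k+1))) :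
    min (SG x y) 2 = lenF b k (x % (k+1)) (y + x / (k+1)) := by
  obtain ⟨m, e, he, rfl⟩ : ∃ m e, e < k + 1 ∧ x = e + (k+1) * m :=
    ⟨x / (k+1), x % (k+1), Nat.mod_lt _ (by omega), (Nat.mod_add_div x (k+1)).symm⟩
  have dm : ∀ m e, e < k + 1 → (e + (k+1) * m) % (k+1) = e ∧ (e + (k+1)*m) / (k+1) = m := by
    intro m e he
    refine ⟨by rw [Nat.add_mul_mod_self_left, Nat.mod_eq_of_lt he], ?_⟩
    rw [Nat.add_mul_div_left _ _ (by omega), Nat.div_eq_of_lt he, zero_add]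
  rw [(dm m e he).1, (dm m e he).2] at ihy ⊢
  have ih : ∀ x' m' e' y', x' = e' + (k+1) * m' → e' < k + 1 → x' < e + (k+1) * m →
      min (SG x' y') 2 = lenF b k e' (y' + m') := by
    intro x' m' e' y' h1 h2 h3
    rw [ihx x' h3, h1, (dm m' e' h2).1, (dm m' e' h2).2]
  have hrec := lengyel_zero_one b k SG hSG (e + (k+1)*m) y
  -- the first option
  have o1 : b ≤ y → (lenF b k e (y + m) = 2 ∧ min (SG (e + (k+1)*m) (y-b)) 2 = 2) ∨
      (lenF b k e (y + m) ≤ 1 ∧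
        min (SG (e + (k+1)*m) (y-b)) 2 = 1 - lenF b k e (y + m)) := by
    intro h
    rw [ihy h]
    have := lenF_add b k e (y - b + m) hb
    rw [show y - b + m + b = y + m by omega] at this
    omega
  rcases Nat.lt_or_ge e k with hek | hek
  · have hF : lenF b k e (y+m) = lenA b e (y+m) := by simp [lenF, hek]
    have hle := lenA_le b e (y+m)
    -- second option
    have o2 : k ≤ e + (k+1)*m → ∃ m', m = m' + 1 ∧
        min (SG (e + (k+1)*m - k) y) 2 = lenF b k (e+1) (y+m') := by
      intro h
      rcases m with _ | m'
      · omega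
      · refine ⟨m', rfl, ih _ m' (e+1) y ?_ (by omega) (by omega)⟩
        rw [mul_add]; omega
    have o2' : k ≤ e + (k+1)*m →
        min (SG (e + (k+1)*m - k) y) 2 ≠ lenA b e (y+m) := by
      intro h
      obtain ⟨m', rfl, h2⟩ := o2 h
      rw [h2]
      have h3 := lenA_succ b e (y+m')
      rw [← add_assoc] at hle ⊢
      unfold lenF
      split_ifs with c1 c2
      · omega
      · have : k - 1 = e := by omega
        rw [this] at c2
        have := lenA_le b 0 (y+m')
        omega
      · omega
    rcases Nat.eq_zero_or_pos e with he0 | he0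
    · subst he0
      rcases m with _ | m'
      · clear o2
        have := lenA_small b y
        simp only [add_zero] at *
        omega
      · obtain ⟨m'', hm, h2⟩ := o2 (by rw [mul_add]; omega)
        obtain rfl : m' = m'' := by omega
        clear o2
        have o2'' := o2' (by rw [mul_add]; omega)
        have h3 := ih (0 + (k+1)*(m'+1) - 1) m' k (y+1) (by rw [mul_add]; omega) (by omega)
          (by rw [mul_add]; omega)
        rw [show y + 1 + m' = y + (m'+1) by ring] at h3
        have h3' : lenF b k k (y + (m'+1)) ≠ lenA b 0 (y+(m'+1)) := by
          unfold lenF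
          split_ifs <;> omega
        have hor : lenF b k (0+1) (y+m') = 1 - lenA b 0 (y+(m'+1)) ∨
            lenF b k k (y + (m'+1)) = 1 - lenA b 0 (y+(m'+1)) := by
          rcases Nat.lt_or_ge 1 k with h | h
          · left
            rw [← add_assoc, ← lenA_succ]
            simp [lenF, h]
          · obtain rfl : k = 1 := by omega
            exact len_k1 b (y+m') (by omega)
        have hk1 : k ≤ 0 + (k+1)*(m'+1) := by rw [mul_add]; omega
        have hk2 : 1 ≤ 0 + (k+1)*(m'+1) := by rw [mul_add]; omega
        rw [hF] at o1 ⊢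
        simp only [hk1, hk2, true_and] at hrec
        omega
    · clear o2
      obtain ⟨e', rfl⟩ : ∃ e', e = e' + 1 := ⟨e - 1, by omega⟩
      have h3 := ih (e' + 1 + (k+1)*m - 1) m e' (y+1) (by omega) (by omega) (by omega)
      have h4 : lenF b k e' (y+1+m) = lenA b e' (y+1+m) := by
        unfold lenF; rw [if_pos (by omega)]
      have h5 := lenA_succ b e' (y+m)
      rw [show y + m + 1 = y + 1 + m by ring] at h5
      have h6 := lenA_le b e' (y+1+m)
      rw [hF] at o1 ⊢
      omega
  · obtain rfl : e = k := by omega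
    have h2 := ih (e + (e+1)*m - e) m 0 y (by omega) (by omega) (by omega)
    have h3 := ih (e + (e+1)*m - 1) m (e-1) (y+1) (by omega) (by omega) (by omega)
    have h2' : lenF b e 0 (y+m) = lenA b 0 (y+m) := by simp [lenF, hk]
    have h3' : lenF b e (e-1) (y+1+m) = lenA b (e-1) (y+m+1) := by
      unfold lenF; rw [if_pos (by omega), show y + m + 1 = y + 1 + m by ring]
    have h4 := lenA_le b 0 (y+m)
    have h5 := lenA_le b (e-1) (y+m+1)
    have hF : lenF b e e (y+m) = if lenA b (e - 1) (y+m + 1) = lenA b 0 (y+m)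
        then 1 - lenA b 0 (y+m) else 2 := by simp [lenF]
    split_ifs at hF <;> omega

theorem len_explicit (b k : ℕ) (hb : 0 < b) (hk : 0 < k) (hne : ¬ (b = 1 ∧ k = 1))
    (SG : ℕ → ℕ → ℕ) (hSG : IsLengyelSG b k 0 1 1 SG) (x : ℕ) :
    ∀ y, min (SG x y) 2 = lenF b k (x % (k+1)) (y + x / (k+1)) := by
  induction x using Nat.strong_induction_on with
  | _ x ihx =>
    intro y
    induction y using Nat.strong_induction_on with
    | _ y ihy =>
      exact len_step b k hb hk hne SG hSG x y (fun h => ihy (y - b) (by omega)) ihx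

/-- If `(b,x₁) ≠ (1,1)`, then `L(b;x₁,0;1,1)` has diagonal periodicity:
`SG*(x,y) = SG*(x+x₁+1, y−1)` for all `y ≥ 1`, where `SG* = min(SG, 2)`. -/
theorem diagonal_periodicity_L_b_x1_0_1_1 (b x1 : ℕ) (hb : 0 < b) (hx1 : 0 < x1)
    (hne : ¬ (b = 1 ∧ x1 = 1))
    (SG : ℕ → ℕ → ℕ) (hSG : IsLengyelSG b x1 0 1 1 SG) :
    ∀ x y : ℕ, 1 ≤ y → min (SG x y) 2 = min (SG (x + x1 + 1) (y - 1)) 2 := by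
  intro x y hy
  rw [len_explicit b x1 hb hx1 hne SG hSG, len_explicit b x1 hb hx1 hne SG hSG, add_assoc x x1 1,
    Nat.add_mod_right, Nat.add_div_right _ (by omega)]
  congr 1
  omega
end

section
/- (Second Main Theorem) For any Lengyel transfer game L(b;x₁,y₁;x₂,y₂), set g = 2b(x₁+x₂) / gcd(2b, y₁+y₂). Then g is an eventual horizontal period: there exists x₀ ∈ ℕ such that SG(x + g, y) = SG(x,y) for all x ≥ x₀ and all y ∈ ℕ. (Equivalently, the first component of the eventual period divides g.) -/
/-- The vertical phase of row `y`. -/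
def lengyelEta (b y : ℕ) : ℕ := if y % (2 * b) < b then 0 else 1

/-- The value of a position whose horizontal options have values `u`, `v` and whose phase is `e`
(a missing option is encoded by the value `2`). -/
def lengyelVal (u v e : ℕ) : ℕ :=
  if 2 ≤ u then (if 2 ≤ v then e else 1 - v)
  else if 2 ≤ v then 1 - u else if u = v then 1 - u else 2 + e

lemma lengyelEta_le (b y : ℕ) : lengyelEta b y ≤ 1 := by
  unfold lengyelEta; split_ifs <;> omega

lemma lengyelEta_lt {b y : ℕ} (h : y < b) : lengyelEta b y = 0 := by
  unfold lengyelEta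
  rw [Nat.mod_eq_of_lt (by omega), if_pos h]

lemma lengyelEta_add {b : ℕ} (hb : 0 < b) (y : ℕ) :
    lengyelEta b (y + b) = 1 - lengyelEta b y := by
  unfold lengyelEta
  have h1 : y % (2 * b) < 2 * b := Nat.mod_lt _ (by omega)
  have h2 : (y + b) % (2 * b) = (y % (2 * b) + b) % (2 * b) := by simp
  rw [h2]
  by_cases h : y % (2 * b) < b
  · rw [Nat.mod_eq_of_lt (by omega), if_neg (by omega), if_pos h]
  · have h3 : (y % (2 * b) + b) % (2 * b) = y % (2 * b) - b := by
      rw [Nat.mod_eq_sub_mod (by omega), Nat.mod_eq_of_lt (by omega)]; omega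
    rw [h3, if_pos (by omega), if_neg h]

lemma lengyelEta_congr {b y z : ℕ} (h : y ≡ z [MOD 2 * b]) :
    lengyelEta b y = lengyelEta b z := by
  unfold lengyelEta
  rw [show y % (2 * b) = z % (2 * b) from h]

lemma lengyel_mex_spec {S : Set ℕ} (hS : S.Finite) {m : ℕ} (h : m = mex S) :
    m ∉ S ∧ ∀ k, k < m → k ∈ S := by
  have hne : {n : ℕ | n ∉ S}.Nonempty := hS.infinite_compl.nonempty
  subst h
  refine ⟨Nat.sInf_mem hne, fun k hk => ?_⟩
  by_contra hc
  exact Nat.notMem_of_lt_sInf hk hc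

lemma lengyel_rule {b x1 y1 x2 y2 : ℕ} {SG : ℕ → ℕ → ℕ} (hSG : IsLengyelSG b x1 y1 x2 y2 SG)
    (x y : ℕ) :
    (b ≤ y → SG x y ≠ SG x (y - b)) ∧ (x1 ≤ x → SG x y ≠ SG (x - x1) (y + y1)) ∧
    (x2 ≤ x → SG x y ≠ SG (x - x2) (y + y2)) ∧
    ∀ k, k < SG x y → (b ≤ y ∧ k = SG x (y - b)) ∨ (x1 ≤ x ∧ k = SG (x - x1) (y + y1)) ∨
      (x2 ≤ x ∧ k = SG (x - x2) (y + y2)) := by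
  have h := lengyel_mex_spec (by
    refine Set.Finite.union (Set.Finite.union ?_ ?_) ?_ <;> split_ifs <;> simp) (hSG x y)
  obtain ⟨h1, h2⟩ := h
  refine ⟨fun h => ?_, fun h => ?_, fun h => ?_, fun k hk => ?_⟩
  · intro e; apply h1; simp [h, ← e]
  · intro e; apply h1; simp [h, ← e]
  · intro e; apply h1; simp [h, ← e]
  · have := h2 k hk
    by_cases c1 : b ≤ y <;> by_cases c2 : x1 ≤ x <;> by_cases c3 : x2 ≤ x <;>
      simp [c1, c2, c3] at this ⊢ <;> tauto

/-- Values half a period apart. -/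
def lengyelW (p q : ℕ) : Prop := (p ≤ 1 ∧ q = 1 - p) ∨ (2 ≤ p ∧ 2 ≤ q)

lemma lengyelW_val {u v u' v' e : ℕ} (he : e ≤ 1) (hu : lengyelW u u') (hv : lengyelW v v') :
    lengyelW (lengyelVal u v e) (lengyelVal u' v' (1 - e)) := by
  unfold lengyelW lengyelVal at *
  split_ifs <;> omega

/-- horizontal option, encoded -/
def lengyelOpt (SG : ℕ → ℕ → ℕ) (a c x y : ℕ) : ℕ := if a ≤ x then SG (x - a) (y + c) else 2

lemma lengyel_arith_up {m p u v u' v' e : ℕ} (he : e ≤ 1) (hp : p = lengyelVal u' v' e)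
    (w1 : lengyelW u' u) (w2 : lengyelW v' v) (r1 : m ≠ p) (r2 : u ≤ 1 → m ≠ u)
    (r3 : v ≤ 1 → m ≠ v) (r4 : ∀ k, k < m → k = p ∨ k = u ∨ k = v) :
    m = lengyelVal u v (1 - e) := by
  have k0 := r4 0
  have k1 := r4 1
  have k2 := r4 2
  have k3 := r4 3
  clear r4
  unfold lengyelW at w1 w2
  unfold lengyelVal at hp ⊢
  rcases w1 with w1 | w1 <;> rcases w2 with w2 | w2
  · rw [if_neg (by omega), if_neg (by omega)] at hp
    rw [if_neg (by omega), if_neg (by omega)]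
    split_ifs at hp ⊢ <;> omega
  · rw [if_neg (by omega), if_pos (by omega)] at hp
    rw [if_neg (by omega), if_pos (by omega)]
    omega
  · rw [if_pos (by omega), if_neg (by omega)] at hp
    rw [if_pos (by omega), if_neg (by omega)]
    omega
  · rw [if_pos (by omega), if_pos (by omega)] at hp
    rw [if_pos (by omega), if_pos (by omega)]
    omega

lemma lengyel_val {b x1 y1 x2 y2 : ℕ} {SG : ℕ → ℕ → ℕ} (hb : 0 < b) (hx1 : 0 < x1)
    (hx2 : 0 < x2) (hSG : IsLengyelSG b x1 y1 x2 y2 SG) (x : ℕ) :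
    (∀ y, SG x y = lengyelVal (lengyelOpt SG x1 y1 x y) (lengyelOpt SG x2 y2 x y)
      (lengyelEta b y)) ∧ ∀ y, lengyelW (SG x y) (SG x (y + b)) := by
  induction x using Nat.strong_induction_on with
  | _ x ih =>
  have hopt : ∀ a c, 0 < a → ∀ y, lengyelW (lengyelOpt SG a c x y) (lengyelOpt SG a c x (y + b)) := by
    intro a c ha y
    unfold lengyelOpt
    split_ifs with h
    · have := (ih (x - a) (by omega)).2 (y + c)
      rwa [show y + c + b = y + b + c by ring] at this
    · right; omega
  have h1 := hopt x1 y1 hx1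
  have h2 := hopt x2 y2 hx2
  have key : ∀ y, SG x y = lengyelVal (lengyelOpt SG x1 y1 x y) (lengyelOpt SG x2 y2 x y)
      (lengyelEta b y) := by
    intro y
    induction y using Nat.strong_induction_on with
    | _ y ihy =>
    obtain ⟨r1, r2, r3, r4⟩ := lengyel_rule hSG x y
    have k0 := r4 0
    have k1 := r4 1
    have k2 := r4 2
    have k3 := r4 3
    have o1 : (x1 ≤ x ∧ lengyelOpt SG x1 y1 x y = SG (x - x1) (y + y1)) ∨
        (¬ x1 ≤ x ∧ lengyelOpt SG x1 y1 x y = 2) := by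
      unfold lengyelOpt; split_ifs with h <;> simp [h]
    have o2 : (x2 ≤ x ∧ lengyelOpt SG x2 y2 x y = SG (x - x2) (y + y2)) ∨
        (¬ x2 ≤ x ∧ lengyelOpt SG x2 y2 x y = 2) := by
      unfold lengyelOpt; split_ifs with h <;> simp [h]
    by_cases hy : y < b
    · have he := lengyelEta_lt hy
      rw [he]
      generalize lengyelOpt SG x1 y1 x y = u at *
      generalize lengyelOpt SG x2 y2 x y = v at *
      unfold lengyelVal
      split_ifs <;> omega
    · have hp := ihy (y - b) (by omega)
      have w1 := h1 (y - b)
      have w2 := h2 (y - b)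
      have e1 := lengyelEta_add hb (y - b)
      have e0 := lengyelEta_le b (y - b)
      rw [Nat.sub_add_cancel (by omega)] at w1 w2 e1
      rw [e1]
      refine lengyel_arith_up e0 hp w1 w2 (r1 (by omega)) ?_ ?_ ?_
      · omega
      · omega
      · intro k hk
        have := r4 k hk
        omega
  refine ⟨key, fun y => ?_⟩
  rw [key y, key (y + b), lengyelEta_add hb]
  exact lengyelW_val (lengyelEta_le _ _) (h1 y) (h2 y)

lemma lengyel_eventually {p : ℕ → Prop} (h : ∀ i, p (i + 1) → p i) :
    ∀ᶠ i in Filter.atTop, p i → p (i + 1) := by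
  by_cases hn : ∃ n, ¬ p n
  · obtain ⟨n, hn⟩ := hn
    filter_upwards [Filter.eventually_ge_atTop n] with i hi hpi
    exfalso
    induction i, hi using Nat.le_induction with
    | base => exact hn hpi
    | succ m _ ihm => exact ihm (h m hpi)
  · push Not at hn
    exact Filter.Eventually.of_forall fun i _ => hn _

lemma lengyel_arith_mono {A B w e f g p q d : ℕ} (hg : g ≤ 1) (he : e ≤ 1) (hf : f ≤ 1)
    (h1 : d = lengyelVal A B g) (h2 : A = lengyelVal p w e) (h3 : B = lengyelVal w q f)
    (h : 2 ≤ d) : 2 ≤ w := by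
  by_contra hw
  have hA : 2 ≤ A ∨ A = 1 - w := by
    unfold lengyelVal at h2; split_ifs at h2 <;> omega
  have hB : 2 ≤ B ∨ B = 1 - w := by
    unfold lengyelVal at h3; split_ifs at h3 <;> omega
  clear h2 h3
  unfold lengyelVal at h1; split_ifs at h1 <;> omega

lemma lengyel_arith_keep {A B w e f g p q d : ℕ}
    (h1 : d = lengyelVal A B g) (h2 : A = lengyelVal p w e) (h3 : B = lengyelVal w q f)
    (hw : w ≤ 1) (hn : ¬ (2 ≤ A ∧ 2 ≤ B)) : d = w := by
  have hA : 2 ≤ A ∨ A = 1 - w := by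
    unfold lengyelVal at h2; split_ifs at h2 <;> omega
  have hB : 2 ≤ B ∨ B = 1 - w := by
    unfold lengyelVal at h3; split_ifs at h3 <;> omega
  clear h2 h3
  unfold lengyelVal at h1; split_ifs at h1 <;> omega

/-- Abstract core: a function with the recursive structure above. -/
lemma lengyel_core {b x1 y1 x2 y2 : ℕ} {SG : ℕ → ℕ → ℕ} (hb : 0 < b) (hx1 : 0 < x1)
    (hper : ∀ x y z, y ≡ z [MOD 2 * b] → SG x y = SG x z)
    (hbig : ∀ x y, 2 ≤ SG x y → SG x y = 2 + lengyelEta b y)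
    (hrec : ∀ x y, x1 ≤ x → x2 ≤ x → SG x y =
      lengyelVal (SG (x - x1) (y + y1)) (SG (x - x2) (y + y2)) (lengyelEta b y))
    (k : ℕ) (hk : 2 * b ∣ k * (y1 + y2)) :
    ∃ x0 : ℕ, ∀ x : ℕ, x0 ≤ x → ∀ y : ℕ, SG (x + k * (x1 + x2)) y = SG x y := by
  obtain ⟨T, hT⟩ : ∃ T, T = (2 * b - 1) * (y1 + y2) := ⟨_, rfl⟩
  obtain ⟨s, hs⟩ : ∃ s, s = x1 + x2 := ⟨_, rfl⟩
  have hTt : T + (y1 + y2) = 2 * b * (y1 + y2) := by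
    obtain ⟨c, hc⟩ : ∃ c, 2 * b = c + 1 := ⟨2 * b - 1, by omega⟩
    rw [hT, hc, Nat.add_sub_cancel]; ring
  have hkT : 2 * b ∣ k * T := by
    have h : k * T = (2 * b - 1) * (k * (y1 + y2)) := by rw [hT]; ring
    rw [h]; exact Dvd.dvd.mul_left hk _
  have hadd : ∀ y c, y + 2 * b * c ≡ y [MOD 2 * b] := fun y c => by simp [Nat.ModEq]
  -- the three recursions around one diagonal step
  have hstep : ∀ x y, s ≤ x → ∃ e f p q,
      SG (x + s) (y + T) = lengyelVal (SG (x + x2) (y + T + y1)) (SG (x + x1) (y + T + y2))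
        (lengyelEta b (y + T)) ∧
      SG (x + x2) (y + T + y1) = lengyelVal p (SG x y) e ∧
      SG (x + x1) (y + T + y2) = lengyelVal (SG x y) q f ∧ e ≤ 1 ∧ f ≤ 1 := by
    intro x y hx
    refine ⟨lengyelEta b (y + T + y1), lengyelEta b (y + T + y2), SG (x + x2 - x1) (y + T + y1 + y1),
      SG (x + x1 - x2) (y + T + y2 + y2), ?_, ?_, ?_, lengyelEta_le _ _, lengyelEta_le _ _⟩
    · rw [hrec (x + s) (y + T) (by omega) (by omega), show x + s - x1 = x + x2 by omega,
        show x + s - x2 = x + x1 by omega]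
    · rw [hrec (x + x2) (y + T + y1) (by omega) (by omega), show x + x2 - x2 = x by omega,
        hper x (y + T + y1 + y2) y
          (by rw [show y + T + y1 + y2 = y + 2 * b * (y1 + y2) by omega]; exact hadd _ _)]
    · rw [hrec (x + x1) (y + T + y2) (by omega) (by omega), show x + x1 - x1 = x by omega,
        hper x (y + T + y2 + y1) y
          (by rw [show y + T + y2 + y1 = y + 2 * b * (y1 + y2) by omega]; exact hadd _ _)]
  have hmono : ∀ x y, s ≤ x → 2 ≤ SG (x + s) (y + T) → 2 ≤ SG x y := by
    intro x y hx h
    have hη := lengyelEta_le b (y + T)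
    obtain ⟨e, f, p, q, h1, h2, h3, he, hf⟩ := hstep x y hx
    exact lengyel_arith_mono hη he hf h1 h2 h3 h
  have hkeep : ∀ x y, s ≤ x → SG x y ≤ 1 →
      ¬ (2 ≤ SG (x + x2) (y + T + y1) ∧ 2 ≤ SG (x + x1) (y + T + y2)) →
      SG (x + s) (y + T) = SG x y := by
    intro x y hx h hn
    obtain ⟨e, f, p, q, h1, h2, h3, he, hf⟩ := hstep x y hx
    exact lengyel_arith_keep h1 h2 h3 h hn
  -- the big set is eventually invariant
  obtain ⟨x0, hx0s, hinv⟩ : ∃ x0, s ≤ x0 ∧ ∀ x y, x0 ≤ x → 2 ≤ SG x y → 2 ≤ SG (x + s) (y + T) := by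
    have hev : ∀ᶠ i in Filter.atTop, ∀ a ∈ Finset.range s ×ˢ Finset.range (2 * b),
        2 ≤ SG (a.1 + s + i * s) (a.2 + i * T) →
          2 ≤ SG (a.1 + s + (i + 1) * s) (a.2 + (i + 1) * T) := by
      rw [Filter.eventually_all_finset]
      intro a _
      apply lengyel_eventually (p := fun i => 2 ≤ SG (a.1 + s + i * s) (a.2 + i * T))
      intro i hi
      apply hmono _ _ (by nlinarith [Nat.zero_le (i * s)])
      convert hi using 2 <;> ring
    obtain ⟨I, hI⟩ := Filter.eventually_atTop.1 hev
    have hspos : 0 < s := by omega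
    refine ⟨s + I * s, by omega, fun x y hx h => ?_⟩
    obtain ⟨z, rfl⟩ : ∃ z, x = z + s := ⟨x - s, by omega⟩
    have hi : I ≤ z / s := (Nat.le_div_iff_mul_le hspos).2 (by omega)
    have hz : z % s + s + (z / s) * s = z + s := by
      have := Nat.mod_add_div z s
      rw [Nat.mul_comm] at this; omega
    have hm : (y + (z / s) * (y1 + y2)) % (2 * b) + (z / s) * T ≡ y [MOD 2 * b] := by
      have e1 : (y + (z / s) * (y1 + y2)) % (2 * b) + (z / s) * T ≡
          (y + (z / s) * (y1 + y2)) + (z / s) * T [MOD 2 * b] :=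
        Nat.ModEq.add_right _ (Nat.mod_modEq _ _)
      refine e1.trans ?_
      rw [show (y + (z / s) * (y1 + y2)) + (z / s) * T = y + (z / s) * (T + (y1 + y2)) by ring, hTt,
        show y + z / s * (2 * b * (y1 + y2)) = y + 2 * b * (z / s * (y1 + y2)) by ring]
      exact hadd _ _
    have := hI (z / s) hi (z % s, (y + (z / s) * (y1 + y2)) % (2 * b))
      (by simp [Nat.mod_lt _ hspos, Nat.mod_lt _ (show 0 < 2 * b by omega)])
    simp only [Nat.add_mul, one_mul, ← Nat.add_assoc] at this
    rw [hz, hper _ _ _ hm, hper _ _ _ (hm.add_right T)] at this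
    exact this h
  have hiff : ∀ x y i, x0 ≤ x → (2 ≤ SG (x + i * s) (y + i * T) ↔ 2 ≤ SG x y) := by
    intro x y i hx
    induction i with
    | zero => simp
    | succ i ih =>
      rw [← ih, show x + (i + 1) * s = x + i * s + s by ring,
        show y + (i + 1) * T = y + i * T + T by ring]
      have : x0 ≤ x + i * s := le_trans hx (Nat.le_add_right _ _)
      exact ⟨hmono _ _ (le_trans hx0s this), hinv _ _ this⟩
  have hmain : ∀ x y, x0 ≤ x → SG (x + (k + 1) * s) (y + (k + 1) * T) = SG (x + s) (y + T) := by
    intro x y hx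
    have hη : lengyelEta b (y + (k + 1) * T) = lengyelEta b (y + T) := by
      obtain ⟨c, hc⟩ := hkT
      apply lengyelEta_congr
      rw [show y + (k + 1) * T = y + T + k * T by ring, hc]
      exact hadd _ _
    by_cases hD : 2 ≤ SG x y
    · have a1 := hbig _ _ ((hiff x y (k + 1) hx).2 hD)
      have a2 := (hiff x y 1 hx).2 hD
      simp only [one_mul] at a2
      rw [a1, hbig _ _ a2, hη]
    · have hAB : ∀ i, (2 ≤ SG (x + i * s + x2) (y + i * T + T + y1) ∧
          2 ≤ SG (x + i * s + x1) (y + i * T + T + y2)) ↔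
          (2 ≤ SG (x + x2) (y + T + y1) ∧ 2 ≤ SG (x + x1) (y + T + y2)) := by
        intro i
        rw [← hiff (x + x2) (y + T + y1) i (by omega), ← hiff (x + x1) (y + T + y2) i (by omega),
          show x + i * s + x2 = x + x2 + i * s by ring, show x + i * s + x1 = x + x1 + i * s by ring,
          show y + i * T + T + y1 = y + T + y1 + i * T by ring,
          show y + i * T + T + y2 = y + T + y2 + i * T by ring]
      by_cases hZ : 2 ≤ SG (x + x2) (y + T + y1) ∧ 2 ≤ SG (x + x1) (y + T + y2)
      · have hall : ∀ i, SG (x + (i + 1) * s) (y + (i + 1) * T) =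
            lengyelEta b (y + (i + 1) * T) := by
          intro i
          obtain ⟨e, f, p, q, h1, -⟩ := hstep (x + i * s) (y + i * T)
            (le_trans hx0s (le_trans hx (Nat.le_add_right _ _)))
          obtain ⟨z1, z2⟩ := (hAB i).2 hZ
          rw [show x + (i + 1) * s = x + i * s + s by ring,
            show y + (i + 1) * T = y + i * T + T by ring, h1]
          simp [lengyelVal, z1, z2]
        have a0 := hall 0
        simp only [zero_add, one_mul] at a0
        rw [hall k, hη, a0]
      · have hall : ∀ i, SG (x + i * s) (y + i * T) = SG x y := by
          intro i
          induction i with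
          | zero => simp
          | succ i ih =>
            rw [← ih, show x + (i + 1) * s = x + i * s + s by ring,
              show y + (i + 1) * T = y + i * T + T by ring]
            exact hkeep _ _ (le_trans hx0s (le_trans hx (Nat.le_add_right _ _))) (by omega)
              (fun h => hZ ((hAB i).1 h))
        have a1 := hall 1
        simp only [one_mul] at a1
        rw [hall, a1]
  refine ⟨x0 + s, fun x hx y => ?_⟩
  have := hmain (x - s) (y + (y1 + y2)) (by omega)
  obtain ⟨c, hc⟩ := hkT
  rw [show x - s + (k + 1) * s = x + k * s by
      rw [Nat.add_mul, one_mul]; omega, show x - s + s = x by omega,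
    show y + (y1 + y2) + (k + 1) * T = y + (T + (y1 + y2)) + k * T by ring,
    show y + (y1 + y2) + T = y + (T + (y1 + y2)) by ring, hTt, hc,
    hper _ _ _ ((hadd _ c).trans (hadd y (y1 + y2))), hper x _ _ (hadd y (y1 + y2)), hs] at this
  exact this

/-- Second Main Theorem: `g = 2b(x₁+x₂)/gcd(2b, y₁+y₂)` is an eventual horizontal period
of `L(b;x₁,y₁;x₂,y₂)`. -/
theorem second_main_theorem (b x1 x2 y1 y2 : ℕ) (hb : 0 < b) (hx1 : 0 < x1) (hx2 : 0 < x2)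
    (SG : ℕ → ℕ → ℕ) (hSG : IsLengyelSG b x1 y1 x2 y2 SG) :
    ∃ x0 : ℕ, ∀ x : ℕ, x0 ≤ x → ∀ y : ℕ,
      SG (x + 2 * b * (x1 + x2) / Nat.gcd (2 * b) (y1 + y2)) y = SG x y := by
  have hV := lengyel_val hb hx1 hx2 hSG
  have hbig : ∀ x y, 2 ≤ SG x y → SG x y = 2 + lengyelEta b y := by
    intro x y h
    have h1 := (hV x).1 y
    have h2 := lengyelEta_le b y
    unfold lengyelVal at h1
    split_ifs at h1 <;> omega
  have hper1 : ∀ x y, SG x (y + 2 * b) = SG x y := by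
    intro x y
    have h1 := (hV x).2 y
    have h2 := (hV x).2 (y + b)
    rw [show y + b + b = y + 2 * b by ring] at h2
    have h3 := hbig x y
    have h4 := hbig x (y + 2 * b)
    have h5 : lengyelEta b (y + 2 * b) = lengyelEta b y :=
      lengyelEta_congr (by simp [Nat.ModEq])
    unfold lengyelW at h1 h2
    omega
  have hperm : ∀ x y n, SG x (y + 2 * b * n) = SG x y := by
    intro x y n
    induction n with
    | zero => simp
    | succ n ih => rw [← ih, ← hper1 x (y + 2 * b * n)]; congr 1; ring
  have hper : ∀ x y z, y ≡ z [MOD 2 * b] → SG x y = SG x z := by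
    intro x y z h
    rw [← Nat.mod_add_div y (2 * b), ← Nat.mod_add_div z (2 * b), hperm, hperm,
      show y % (2 * b) = z % (2 * b) from h]
  have hd : Nat.gcd (2 * b) (y1 + y2) ∣ 2 * b := Nat.gcd_dvd_left _ _
  rw [Nat.mul_div_right_comm hd]
  apply lengyel_core hb hx1 hper hbig
  · intro x y c1 c2
    have h1 := (hV x).1 y
    simpa only [lengyelOpt, if_pos c1, if_pos c2] using h1
  · obtain ⟨c, hc⟩ := Nat.gcd_dvd_right (2 * b) (y1 + y2)
    refine ⟨c, ?_⟩
    calc 2 * b / Nat.gcd (2 * b) (y1 + y2) * (y1 + y2)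
        = 2 * b / Nat.gcd (2 * b) (y1 + y2) * (Nat.gcd (2 * b) (y1 + y2) * c) := by
          exact congrArg _ hc
      _ = 2 * b * c := by rw [← Nat.mul_assoc, Nat.div_mul_cancel hd]
end

section
/- Suppose 0 < y₁ < 2b, 0 < y₂ < 2b, and y₁ + y₂ = 2b. Then the Lengyel transfer game L(b;x₁,y₁;x₂,y₂) has diagonal periodicity — SG*(x,y) = SG*(x + x₁ + x₂, y − 2b) for all (x,y) with y ≥ 2b — and it has no preperiod and horizontal period x₁ + x₂: SG(x + x₁ + x₂, y) = SG(x,y) for all (x,y) ∈ ℕ×ℕ. -/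
/-- `v` is the value of an option of `(x,y)` obtained by a transfer move. -/
def POpt (x1 y1 x2 y2 : ℕ) (SG : ℕ → ℕ → ℕ) (x y v : ℕ) : Prop :=
  (x1 ≤ x ∧ v = SG (x - x1) (y + y1)) ∨ (x2 ≤ x ∧ v = SG (x - x2) (y + y2))

/-- Exchange `2k` and `2k+1`. -/
def flp (n : ℕ) : ℕ := if n % 2 = 0 then n + 1 else n - 1

theorem flp_flp (n : ℕ) : flp (flp n) = n := by
  unfold flp; split_ifs <;> omega

theorem sg_spec {b x1 y1 x2 y2 : ℕ} {SG : ℕ → ℕ → ℕ} (hSG : IsLengyelSG b x1 y1 x2 y2 SG)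
    (x y : ℕ) :
    ¬ ((b ≤ y ∧ SG x y = SG x (y - b)) ∨ POpt x1 y1 x2 y2 SG x y (SG x y)) ∧
    ∀ v < SG x y, (b ≤ y ∧ v = SG x (y - b)) ∨ POpt x1 y1 x2 y2 SG x y v := by
  have key : ∀ v, v ∈ ((if b ≤ y then ({SG x (y - b)} : Set ℕ) else ∅) ∪
     (if x1 ≤ x then ({SG (x - x1) (y + y1)} : Set ℕ) else ∅) ∪
     (if x2 ≤ x then ({SG (x - x2) (y + y2)} : Set ℕ) else ∅)) ↔
     ((b ≤ y ∧ v = SG x (y - b)) ∨ POpt x1 y1 x2 y2 SG x y v) := by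
    intro v
    unfold POpt
    split_ifs <;> simp [*] <;> tauto
  have h := hSG x y
  generalize hS : ((if b ≤ y then ({SG x (y - b)} : Set ℕ) else ∅) ∪
     (if x1 ≤ x then ({SG (x - x1) (y + y1)} : Set ℕ) else ∅) ∪
     (if x2 ≤ x then ({SG (x - x2) (y + y2)} : Set ℕ) else ∅)) = S at h key
  have hfin : S.Finite := by
    rw [← hS]
    split_ifs <;> simp
  have hne : {n : ℕ | n ∉ S}.Nonempty := hfin.exists_notMem
  constructor
  · rw [← key]
    have := Nat.sInf_mem hne
    rw [h]
    exact this
  · intro v hv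
    rw [← key]
    rw [h] at hv
    have := Nat.notMem_of_lt_sInf hv
    simpa using this

theorem sg_flp {b x1 y1 x2 y2 : ℕ} {SG : ℕ → ℕ → ℕ} (hb : 0 < b) (hx1 : 0 < x1) (hx2 : 0 < x2)
    (hSG : IsLengyelSG b x1 y1 x2 y2 SG) :
    ∀ x y : ℕ, SG x (y + b) = flp (SG x y) := by
  intro x
  induction x using Nat.strong_induction_on with
  | _ x ihx =>
  intro y
  induction y using Nat.strong_induction_on with
  | _ y ihy =>
  obtain ⟨a1, a2⟩ := sg_spec hSG x y
  obtain ⟨c1, c2⟩ := sg_spec hSG x (y + b)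
  have hPQ : ∀ v, POpt x1 y1 x2 y2 SG x (y + b) (flp v) ↔ POpt x1 y1 x2 y2 SG x y v := by
    intro v
    have e : ∀ u w, flp u = flp w ↔ u = w := fun u w =>
      ⟨fun h => by rw [← flp_flp u, h, flp_flp], fun h => by rw [h]⟩
    unfold POpt
    apply or_congr
    · apply and_congr_right
      intro hx
      rw [show y + b + y1 = y + y1 + b by ring, ihx (x - x1) (by omega), e]
    · apply and_congr_right
      intro hx
      rw [show y + b + y2 = y + y2 + b by ring, ihx (x - x2) (by omega), e]
  have hP2 : ¬ (POpt x1 y1 x2 y2 SG x y 0 ∧ POpt x1 y1 x2 y2 SG x y 1 ∧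
      POpt x1 y1 x2 y2 SG x y 2) := by
    unfold POpt
    omega
  have hprev : b ≤ y → SG x y = flp (SG x (y - b)) := by
    intro h
    have := ihy (y - b) (by omega)
    rwa [Nat.sub_add_cancel h] at this
  have q0 := hPQ 0
  have q1 := hPQ 1
  have q2 := hPQ 2
  have q3 := hPQ 3
  simp only [Nat.add_sub_cancel] at c1 c2
  generalize POpt x1 y1 x2 y2 SG x y = P at *
  generalize POpt x1 y1 x2 y2 SG x (y + b) = Q at *
  generalize SG x y = m at *
  generalize SG x (y + b) = t at *
  generalize SG x (y - b) = n at *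
  have f0 : flp 0 = 1 := rfl
  have f1 : flp 1 = 0 := rfl
  have f2 : flp 2 = 3 := rfl
  have f3 : flp 3 = 2 := rfl
  rw [f0] at q0
  rw [f1] at q1
  rw [f2] at q2
  rw [f3] at q3
  have le : m ≤ 3 := by
    by_contra hm
    have := a2 0 (by omega)
    have := a2 1 (by omega)
    have := a2 2 (by omega)
    have := a2 3 (by omega)
    by_cases hy : b ≤ y
    · have h1 := hprev hy
      unfold flp at h1
      split_ifs at h1 <;> grind
    · grind
  have hn : b ≤ y → n = flp m := fun h => by rw [hprev h, flp_flp]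
  have key : t = flp m ↔ ¬ (t < flp m) ∧ ¬ (flp m < t) := by omega
  rw [key]
  have hQm := c2 (flp m)
  clear hPQ hprev
  constructor
  · intro hlt
    interval_cases m <;> simp only [f0, f1, f2, f3] at * <;> interval_cases t <;> grind
  · intro hlt
    have := hQm hlt
    clear c1 c2
    interval_cases m <;> simp only [f0, f1, f2, f3] at * <;> grind

theorem sg_per {b x1 y1 x2 y2 : ℕ} {SG : ℕ → ℕ → ℕ} (hb : 0 < b) (hx1 : 0 < x1) (hx2 : 0 < x2)
    (hSG : IsLengyelSG b x1 y1 x2 y2 SG) (x y : ℕ) : SG x (y + 2 * b) = SG x y := by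
  rw [show y + 2 * b = y + b + b by ring, sg_flp hb hx1 hx2 hSG, sg_flp hb hx1 hx2 hSG, flp_flp]

theorem sg_hor {b x1 y1 x2 y2 : ℕ} {SG : ℕ → ℕ → ℕ} (hb : 0 < b) (hx1 : 0 < x1) (hx2 : 0 < x2)
    (hsum : y1 + y2 = 2 * b)
    (hSG : IsLengyelSG b x1 y1 x2 y2 SG) :
    ∀ x y : ℕ, SG (x + x1 + x2) y = SG x y := by
  intro x
  induction x using Nat.strong_induction_on with
  | _ x ihx =>
  intro y
  induction y using Nat.strong_induction_on with
  | _ y ihy =>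
  obtain ⟨a1, a2⟩ := sg_spec hSG x y
  obtain ⟨c1, c2⟩ := sg_spec hSG (x + x1 + x2) y
  have d1 := (sg_spec hSG (x + x2) (y + y1)).1
  have d2 := (sg_spec hSG (x + x1) (y + y2)).1
  have e1 : SG (x + x1 + x2 - x1) (y + y1) = SG (x + x2) (y + y1) := by
    congr 1; omega
  have e2 : SG (x + x1 + x2 - x2) (y + y2) = SG (x + x1) (y + y2) := by
    congr 1; omega
  have g1 : SG (x + x2) (y + y1) ≠ SG x y := by
    intro h
    apply d1
    refine Or.inr (Or.inr ⟨by omega, ?_⟩)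
    rw [show y + y1 + y2 = y + 2 * b by omega, sg_per hb hx1 hx2 hSG, Nat.add_sub_cancel, h]
  have g2 : SG (x + x1) (y + y2) ≠ SG x y := by
    intro h
    apply d2
    refine Or.inr (Or.inl ⟨by omega, ?_⟩)
    rw [show y + y2 + y1 = y + 2 * b by omega, sg_per hb hx1 hx2 hSG, Nat.add_sub_cancel, h]
  have i1 : x1 ≤ x → SG (x + x2) (y + y1) = SG (x - x1) (y + y1) := by
    intro h
    rw [← ihx (x - x1) (by omega)]
    congr 1; omega
  have i2 : x2 ≤ x → SG (x + x1) (y + y2) = SG (x - x2) (y + y2) := by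
    intro h
    rw [← ihx (x - x2) (by omega)]
    congr 1; omega
  have j : b ≤ y → SG (x + x1 + x2) (y - b) = SG x (y - b) := fun h => ihy _ (by omega)
  rcases lt_trichotomy (SG (x + x1 + x2) y) (SG x y) with h | h | h
  · exfalso
    apply c1
    rcases a2 _ h with ⟨hy, e⟩ | ⟨hx, e⟩ | ⟨hx, e⟩
    · exact Or.inl ⟨hy, e.trans (j hy).symm⟩
    · exact Or.inr (Or.inl ⟨by omega, by rw [e1, i1 hx, ← e]⟩)
    · exact Or.inr (Or.inr ⟨by omega, by rw [e2, i2 hx, ← e]⟩)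
  · exact h
  · exfalso
    rcases c2 _ h with ⟨hy, e⟩ | ⟨hx, e⟩ | ⟨hx, e⟩
    · exact a1 (Or.inl ⟨hy, e.trans (j hy)⟩)
    · exact g1 (e1.symm.trans e.symm)
    · exact g2 (e2.symm.trans e.symm)

theorem sum_eq_two_b_case (b x1 x2 y1 y2 : ℕ) (hb : 0 < b) (hx1 : 0 < x1) (hx2 : 0 < x2)
    (hy1 : 0 < y1) (hy1' : y1 < 2 * b) (hy2 : 0 < y2) (hy2' : y2 < 2 * b)
    (hsum : y1 + y2 = 2 * b)
    (SG : ℕ → ℕ → ℕ) (hSG : IsLengyelSG b x1 y1 x2 y2 SG) :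
    (∀ x y : ℕ, 2 * b ≤ y →
      min (SG x y) 2 = min (SG (x + x1 + x2) (y - 2 * b)) 2) ∧
    (∀ x y : ℕ, SG (x + x1 + x2) y = SG x y) := by
  have hh := sg_hor hb hx1 hx2 hsum hSG
  refine ⟨fun x y hy => ?_, hh⟩
  have := sg_per hb hx1 hx2 hSG x (y - 2 * b)
  rw [Nat.sub_add_cancel hy] at this
  rw [hh, this]
end

section
/- (Vector Elimination) Consider L(b;x₁,y₁;x₂,y₂) and suppose either (i) there is an odd positive integer k with x₂ = k·x₁ and y₂ ≡ k·y₁ (mod 2b), or (ii) there is an even positive integer k with x₂ = k·x₁ and y₂ ≡ k·y₁ + b (mod 2b). Then L(b;x₁,y₁;x₂,y₂) has the same Sprague–Grundy values as the two-move game L(b;x₁,y₁): for all (x,y) ∈ ℕ×ℕ, SG_{L(b;x₁,y₁;x₂,y₂)}(x,y) = SG_{L(b;x₁,y₁)}(x,y). In particular its SG-values are all 0 or 1 (no 2s or 3s). -/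
theorem mex_eq_aux (S : Set ℕ) (v : ℕ) (hv : v < 2) (h1 : ∀ a ∈ S, a + v = 1)
    (h2 : v = 1 → S.Nonempty) : mex S = v := by
  unfold mex
  have hmem : v ∈ {n : ℕ | n ∉ S} := by
    intro h
    have := h1 v h
    omega
  apply le_antisymm (Nat.sInf_le hmem)
  by_contra hlt
  push Not at hlt
  have hv1 : v = 1 := by omega
  obtain ⟨a, ha⟩ := h2 hv1
  have ha0 : a = 0 := by have := h1 a ha; omega
  have h3 := Nat.sInf_mem (⟨v, hmem⟩ : {n : ℕ | n ∉ S}.Nonempty)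
  have h0 : sInf {n : ℕ | n ∉ S} = 0 := by omega
  rw [h0] at h3
  exact h3 (ha0 ▸ ha)

/-- Closed form of the two-move Sprague–Grundy function. -/
def closedF (b x1 y1 x y : ℕ) : ℕ := (x / x1 + (y + (x / x1) * y1) / b) % 2

theorem div_mod_congr (b a c : ℕ) (h : a ≡ c [MOD 2 * b]) : a / b % 2 = c / b % 2 := by
  rw [← Nat.mod_mul_right_div_self, ← Nat.mod_mul_right_div_self, mul_comm b 2]
  rw [show a % (2 * b) = c % (2 * b) from h]

theorem closedF_b (b x1 y1 x y : ℕ) (hb : 0 < b) (h : b ≤ y) :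
    closedF b x1 y1 x (y - b) + closedF b x1 y1 x y = 1 := by
  unfold closedF
  have : y + (x / x1) * y1 = (y - b + (x / x1) * y1) + b := by omega
  rw [this, Nat.add_div_right _ hb]
  omega

theorem closedF_k (b x1 y1 x2 y2 x y : ℕ) (hb : 0 < b) (hx1 : 0 < x1)
    (hk : (∃ k : ℕ, Odd k ∧ 0 < k ∧ x2 = k * x1 ∧ y2 ≡ k * y1 [MOD 2 * b]) ∨
          (∃ k : ℕ, Even k ∧ 0 < k ∧ x2 = k * x1 ∧ y2 ≡ k * y1 + b [MOD 2 * b]))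
    (h : x2 ≤ x) :
    closedF b x1 y1 (x - x2) (y + y2) + closedF b x1 y1 x y = 1 := by
  unfold closedF
  rcases hk with ⟨k, ⟨j, hj⟩, -, rfl, hy⟩ | ⟨k, ⟨j, hj⟩, -, rfl, hy⟩
  all_goals
    have hkn : k ≤ x / x1 := (Nat.le_div_iff_mul_le hx1).2 h
    have hd : (x - k * x1) / x1 = x / x1 - k := by
      rw [mul_comm k x1, Nat.sub_mul_div]
    rw [hd]
    obtain ⟨m, hm⟩ := Nat.exists_eq_add_of_le hkn
    rw [hm, Nat.add_sub_cancel_left]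
    have e1 := div_mod_congr b _ _ ((hy.add_left y).add_right (m * y1))
  · have e2 : y + k * y1 + m * y1 = y + (k + m) * y1 := by ring
    rw [e2] at e1
    omega
  · have e2 : y + (k * y1 + b) + m * y1 = y + (k + m) * y1 + b := by ring
    rw [e2, Nat.add_div_right _ hb] at e1
    omega

theorem closedF_zero (b x1 y1 x y : ℕ) (h1 : ¬ b ≤ y) (h2 : ¬ x1 ≤ x) :
    closedF b x1 y1 x y = 0 := by
  unfold closedF
  rw [Nat.div_eq_of_lt (by omega : x < x1)]
  simp [Nat.div_eq_of_lt (by omega : y < b)]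

theorem sg3_eq (b x1 x2 y1 y2 : ℕ) (hb : 0 < b) (hx1 : 0 < x1) (hx2 : 0 < x2)
    (hk : (∃ k : ℕ, Odd k ∧ 0 < k ∧ x2 = k * x1 ∧ y2 ≡ k * y1 [MOD 2 * b]) ∨
          (∃ k : ℕ, Even k ∧ 0 < k ∧ x2 = k * x1 ∧ y2 ≡ k * y1 + b [MOD 2 * b]))
    (SG : ℕ → ℕ → ℕ) (hSG : IsLengyelSG b x1 y1 x2 y2 SG) :
    ∀ x y : ℕ, SG x y = closedF b x1 y1 x y := by
  intro x
  induction x using Nat.strong_induction_on with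
  | _ x ihx =>
  intro y
  induction y using Nat.strong_induction_on with
  | _ y ihy =>
  rw [hSG x y]
  apply mex_eq_aux
  · exact Nat.mod_lt _ (by norm_num)
  · rintro a ((ha | ha) | ha)
    · split_ifs at ha with h
      · rw [Set.mem_singleton_iff.1 ha, ihy (y - b) (by omega)]
        exact closedF_b b x1 y1 x y hb h
      · exact ha.elim
    · split_ifs at ha with h
      · rw [Set.mem_singleton_iff.1 ha, ihx (x - x1) (by omega)]
        refine closedF_k b x1 y1 x1 y1 x y hb hx1 (Or.inl ⟨1, odd_one, one_pos, ?_, ?_⟩) h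
        · simp
        · rw [one_mul]
      · exact ha.elim
    · split_ifs at ha with h
      · rw [Set.mem_singleton_iff.1 ha, ihx (x - x2) (by omega)]
        exact closedF_k b x1 y1 x2 y2 x y hb hx1 hk h
      · exact ha.elim
  · intro hv
    by_cases h1 : b ≤ y
    · exact ⟨SG x (y - b), Or.inl (Or.inl (by simp [h1]))⟩
    · by_cases h2 : x1 ≤ x
      · exact ⟨SG (x - x1) (y + y1), Or.inl (Or.inr (by simp [h2]))⟩
      · rw [closedF_zero b x1 y1 x y h1 h2] at hv
        omega

theorem sg2_to_sg3 (b x1 y1 : ℕ) (SG : ℕ → ℕ → ℕ) (h : IsLengyel2SG b x1 y1 SG) :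
    IsLengyelSG b x1 y1 x1 y1 SG := by
  intro x y
  rw [Set.union_assoc, Set.union_self]
  exact h x y

/-- Vector Elimination: if there is an odd positive `k` with `x₂ = k·x₁` and
`y₂ ≡ k·y₁ (mod 2b)`, or an even positive `k` with `x₂ = k·x₁` and
`y₂ ≡ k·y₁ + b (mod 2b)`, then `L(b;x₁,y₁;x₂,y₂)` has the same SG-values as the
two-move game `L(b;x₁,y₁)`; in particular all its values are `0` or `1`. -/
theorem vector_elimination (b x1 x2 y1 y2 : ℕ) (hb : 0 < b) (hx1 : 0 < x1) (hx2 : 0 < x2)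
    (hk : (∃ k : ℕ, Odd k ∧ 0 < k ∧ x2 = k * x1 ∧ y2 ≡ k * y1 [MOD 2 * b]) ∨
          (∃ k : ℕ, Even k ∧ 0 < k ∧ x2 = k * x1 ∧ y2 ≡ k * y1 + b [MOD 2 * b]))
    (SG SG2 : ℕ → ℕ → ℕ)
    (hSG : IsLengyelSG b x1 y1 x2 y2 SG) (hSG2 : IsLengyel2SG b x1 y1 SG2) :
    (∀ x y : ℕ, SG x y = SG2 x y) ∧ (∀ x y : ℕ, SG x y = 0 ∨ SG x y = 1) := by
  have e3 := sg3_eq b x1 x2 y1 y2 hb hx1 hx2 hk SG hSG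
  have e2 := sg3_eq b x1 x1 y1 y1 hb hx1 hx1
    (Or.inl ⟨1, odd_one, one_pos, (one_mul _).symm, by rw [one_mul]⟩) SG2 (sg2_to_sg3 b x1 y1 SG2 hSG2)
  refine ⟨fun x y => by rw [e3, e2], fun x y => ?_⟩
  rw [e3]
  exact Nat.mod_two_eq_zero_or_one _
end
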